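/- Let 0 < p < 1/2 and 0 < R < 1 satisfy R < 1 - (4p(1-p))^{1/(4·ln 2)}. Let (C_k) be a sequence of Reed-Muller codes C_k = RM(m_k, d_k) with lengths n_k = 2^{m_k} → ∞ and limsup_k R(C_k) ≤ R. Then P_err(C_k, p) → 0 as k → ∞; that is, the sequence (C_k) decodes errors on BSC(p) with high probability. -/

import Mathlib

/-!
The proof is a union bound over codewords. With `z = √(4p(1-p))`, the Bhattacharyya bound gives
`P_err ≤ ∑_{x ∈ C, x ≠ 0} z ^ |x|` (`Perr_le`), and the condition on the rate implies
`z < 2 ^ (1 - R) - 1` (`rpow_le_two_rpow_sub_one`). So one can choose `θ > z` and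
`λ = log₂ (1 + θ)` with `R < 1 - λ`. The sum is split at weight `2 ^ (m - k) / 16`, where `k` is of
order `√m log m`.

*High weights.* For every linear code, `log ∑_{c ∈ C} θ ^ |c|` is at most the expected log-size of
the subcode supported on a random set of density `λ` (`log_ZC_le`). For Reed-Muller codes this gives
`log ∑ θ ^ |c| ≤ log 2 · 2 ^ m · h(λ)` (`log_ZC_RM`), where `h = hh m d` is the probability that, on the
erasure channel, the bit at the origin is not recoverable from the other bits. It remains to show
that `h(λ)` is at most `exp (-ε √m log m)` when the rate is below `1 - λ` (`hh_small`).
Restricting `RM(m+1, d)` to the graphs of two random linear functionals on `F₂^m` gives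
`h_{m+1} ≤ ∑_T f̂(T)² / (|T| + 1)`, where `f̂` are the biased Fourier coefficients of the
unrecoverability event for `RM(m, d)` (`hh_succ_le`). In particular `h_{m+1} ≤ (h_m + h_m²) / 2`.
Since `h` integrates to the rate (`area`), and since the rates of `RM(m, d)` and `RM(m+1, d)` differ by
`O(1 / √m)`, `h_m` is mostly near `0` or `1`, and the area forces `h_m(λ) ≤ 1/2` below capacity
(`threshold`). The recursion is then iterated over about `√m` steps, at a negligible cost in rate.
Once `h` is small, hypercontractivity (`bonami`, `level_ineq`) shows that the low Fourier levels are
negligible, so each step gains a factor which is a negative power of `m` (`amplify`).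

*Low weights.* If `|f| ≤ 2 ^ (m - k) / 16`, every value of `f` is a majority vote of `O(m)` random `k`-fold
derivatives of `f`, which are words of `RM(m - k, d - k)`. This bounds the number of such codewords
(`RM_lowWeight_card`), and, since `d ≤ m / 2 + O(√m)`, the dimension of `RM(m - k, d - k)` is smaller
than `2 ^ (m - k)` by a factor `exp (-k² / (8m))`. This makes each dyadic weight class negligible
(`low_sum`).
-/

open Finset Filter

/-- The rate of a binary linear code. -/
noncomputable def codeRate {ι : Type} [Fintype ι] (C : Submodule (ZMod 2) (ι → ZMod 2)) : ℝ :=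
  (Module.finrank (ZMod 2) C : ℝ) / (Fintype.card ι : ℝ)

/-- `weightEnum C i` is the number of codewords of Hamming weight `i`. -/
noncomputable def weightEnum {ι : Type} [Fintype ι] (C : Submodule (ZMod 2) (ι → ZMod 2))
    (i : ℕ) : ℕ :=
  Nat.card {x : ι → ZMod 2 // x ∈ C ∧ hammingNorm x = i}

/-- The permutation `π` of coordinates maps the code `C` onto itself. -/
def PreservesCode {ι : Type} [Fintype ι] (C : Submodule (ZMod 2) (ι → ZMod 2))
    (π : Equiv.Perm ι) : Prop :=
  ∀ x : ι → ZMod 2, x ∈ C ↔ x ∘ π ∈ C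

/-- The automorphism group of `C` acts 2-transitively on coordinates. -/
def DoublyTransitive {ι : Type} [Fintype ι] (C : Submodule (ZMod 2) (ι → ZMod 2)) : Prop :=
  ∀ i₁ j₁ i₂ j₂ : ι, i₁ ≠ j₁ → i₂ ≠ j₂ →
    ∃ π : Equiv.Perm ι, PreservesCode C π ∧ π i₁ = i₂ ∧ π j₁ = j₂

/-- Minimal distance: the least Hamming weight of a nonzero codeword. -/
noncomputable def minDist {ι : Type} [Fintype ι] (C : Submodule (ZMod 2) (ι → ZMod 2)) : ℕ :=
  sInf {d | ∃ x ∈ C, x ≠ 0 ∧ hammingNorm x = d}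

/-- Reed-Muller code RM(m,d). -/
noncomputable def ReedMuller (m d : ℕ) : Submodule (ZMod 2) ((Fin m → ZMod 2) → ZMod 2) :=
  Submodule.map
    (LinearMap.pi fun v : Fin m → ZMod 2 => (MvPolynomial.aeval v).toLinearMap)
    (MvPolynomial.restrictTotalDegree (Fin m) (ZMod 2) d)

open scoped Classical in
/-- ML block error probability on BSC(p). -/
noncomputable def Perr {ι : Type} [Fintype ι] (C : Submodule (ZMod 2) (ι → ZMod 2)) (p : ℝ) : ℝ :=
  ∑ z : ι → ZMod 2,
    if ∃ x ∈ C, x ≠ 0 ∧ hammingNorm (z + x) ≤ hammingNorm z then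
      p ^ hammingNorm z * (1 - p) ^ (Fintype.card ι - hammingNorm z) else 0

/-- Rank of the projection of `C` to the coordinates in `S`. -/
noncomputable def rankC {ι : Type} [Fintype ι] (C : Submodule (ZMod 2) (ι → ZMod 2))
    (S : Finset ι) : ℕ :=
  Module.finrank (ZMod 2)
    (C.map (LinearMap.funLeft (ZMod 2) (ZMod 2) (Subtype.val : {i // i ∈ S} → ι)))

/-- `f_C(S) = |S| - r_C(S)`. -/
noncomputable def fC {ι : Type} [Fintype ι] (C : Submodule (ZMod 2) (ι → ZMod 2))
    (S : Finset ι) : ℝ :=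
  (S.card : ℝ) - (rankC C S : ℝ)

/-- `μ_C(λ) = E_{S ~ λ} f_C(S)`. -/
noncomputable def muC {ι : Type} [Fintype ι] (C : Submodule (ZMod 2) (ι → ZMod 2)) (l : ℝ) : ℝ :=
  ∑ S : Finset ι, l ^ S.card * (1 - l) ^ (Fintype.card ι - S.card) * fC C S

/-- Bit erasure probability `P_{b,i}(p)`. -/
noncomputable def Pbi {ι : Type} [Fintype ι] [DecidableEq ι]
    (C : Submodule (ZMod 2) (ι → ZMod 2)) (i : ι) (p : ℝ) : ℝ :=
  ∑ R ∈ ((Finset.univ : Finset ι).erase i).powerset,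
    (1 - p) ^ R.card * p ^ (Fintype.card ι - R.card) *
      (if rankC C R < rankC C (insert i R) then (1 : ℝ) else 0)

/-- The average EXIT function `h(p)`. -/
noncomputable def exitAvg {ι : Type} [Fintype ι] [DecidableEq ι]
    (C : Submodule (ZMod 2) (ι → ZMod 2)) (p : ℝ) : ℝ :=
  (1 / (Fintype.card ι : ℝ)) * ∑ i : ι, Pbi C i p / p

/-- The dual code. -/
def dualCode {ι : Type} [Fintype ι] (C : Submodule (ZMod 2) (ι → ZMod 2)) :
    Submodule (ZMod 2) (ι → ZMod 2) where
  carrier := {y | ∀ x ∈ C, ∑ i, x i * y i = 0}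
  zero_mem' := by intro x hx; simp
  add_mem' := by
    intro y z hy hz x hx
    simp only [Pi.add_apply, mul_add, Finset.sum_add_distrib, Set.mem_setOf_eq] at *
    rw [hy x hx, hz x hx, add_zero]
  smul_mem' := by
    intro c y hy x hx
    simp only [Pi.smul_apply, smul_eq_mul]
    rw [show (∑ i, x i * (c * y i)) = c * ∑ i, x i * y i by rw [Finset.mul_sum]; congr 1; funext i; ring, hy x hx, mul_zero]

set_option linter.unusedSectionVars false

/-! ### Product Bernoulli expectations on the cube -/

/-- The Bernoulli weight of parameter `t` on `Bool`. -/
def bw (t : ℝ) (b : Bool) : ℝ := if b then t else 1 - t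

/-- Expectation of `F` under the product Bernoulli measure of parameter `t`, as a finite sum. -/
noncomputable def ex {ι : Type} [Fintype ι] [DecidableEq ι] (t : ℝ) (F : (ι → Bool) → ℝ) : ℝ :=
  ∑ x : ι → Bool, (∏ i, bw t (x i)) * F x

section Expectation
variable {ι : Type} [Fintype ι] [DecidableEq ι]

lemma bw_sum (t : ℝ) : ∑ b, bw t b = 1 := by simp [bw]

lemma bw_nonneg {t : ℝ} (h0 : 0 ≤ t) (h1 : t ≤ 1) (b : Bool) : 0 ≤ bw t b := by
  cases b <;> simp [bw] <;> linarith

lemma bwProd_nonneg {t : ℝ} (h0 : 0 ≤ t) (h1 : t ≤ 1) (x : ι → Bool) : 0 ≤ ∏ i, bw t (x i) :=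
  prod_nonneg fun _ _ => bw_nonneg h0 h1 _

lemma ex_add (t : ℝ) (F G : (ι → Bool) → ℝ) : ex t (fun x => F x + G x) = ex t F + ex t G := by
  simp [ex, mul_add, sum_add_distrib]

lemma ex_const_mul (t c : ℝ) (F : (ι → Bool) → ℝ) : ex t (fun x => c * F x) = c * ex t F := by
  simp only [ex, mul_sum]
  exact sum_congr rfl fun x _ => by ring

lemma ex_sum {κ : Type} (s : Finset κ) (t : ℝ) (F : κ → (ι → Bool) → ℝ) :
    ex t (fun x => ∑ k ∈ s, F k x) = ∑ k ∈ s, ex t (F k) := by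
  simp only [ex, mul_sum]
  exact sum_comm

lemma ex_prod (t : ℝ) (g : ι → Bool → ℝ) :
    ex t (fun x => ∏ i, g i (x i)) = ∏ i, ∑ b, bw t b * g i b := by
  simp only [ex, ← prod_mul_distrib]
  rw [prod_univ_sum]
  rw [Fintype.piFinset_univ]

lemma ex_const (t c : ℝ) : ex (ι := ι) t (fun _ => c) = c := by
  have := ex_prod (ι := ι) t (fun _ _ => 1)
  simp only [prod_const_one, mul_one, bw_sum] at this
  have h2 := ex_const_mul (ι := ι) t c (fun _ => 1)
  rw [this] at h2
  simpa using h2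

lemma ex_mono {t : ℝ} (h0 : 0 ≤ t) (h1 : t ≤ 1) {F G : (ι → Bool) → ℝ} (h : ∀ x, F x ≤ G x) :
    ex t F ≤ ex t G :=
  sum_le_sum fun x _ => mul_le_mul_of_nonneg_left (h x) (bwProd_nonneg h0 h1 x)

lemma ex_nonneg {t : ℝ} (h0 : 0 ≤ t) (h1 : t ≤ 1) {F : (ι → Bool) → ℝ} (h : ∀ x, 0 ≤ F x) :
    0 ≤ ex t F :=
  sum_nonneg fun x _ => mul_nonneg (bwProd_nonneg h0 h1 x) (h x)

lemma ex_cauchy {t : ℝ} (h0 : 0 ≤ t) (h1 : t ≤ 1) (F G : (ι → Bool) → ℝ) :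
    ex t (fun x => F x * G x) ^ 2 ≤ ex t (fun x => F x ^ 2) * ex t (fun x => G x ^ 2) := by
  apply sum_sq_le_sum_mul_sum_of_sq_le_mul
  · intro x _; exact mul_nonneg (bwProd_nonneg h0 h1 x) (sq_nonneg _)
  · intro x _; exact mul_nonneg (bwProd_nonneg h0 h1 x) (sq_nonneg _)
  · intro x _; exact le_of_eq (by ring)

/-- Replacing the weight of one coordinate amounts to averaging over that coordinate. -/
lemma sum_weight_update (ν : ι → Bool → ℝ) (i : ι) (hi : ∑ b, ν i b = 1) (ε : Bool → ℝ)
    (F : (ι → Bool) → ℝ) :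
    ∑ x : ι → Bool, (∏ j, Function.update ν i ε j (x j)) * F x =
      ∑ x : ι → Bool, (∏ j, ν j (x j)) * ∑ b, ε b * F (Function.update x i b) := by
  have e1 : ∀ x : ι → Bool, ∏ j, Function.update ν i ε j (x j) =
      ε (x i) * ∏ j ∈ univ.erase i, ν j (x j) := by
    intro x
    rw [← mul_prod_erase univ _ (mem_univ i)]
    congr 1
    · simp
    · exact prod_congr rfl fun j hj => by rw [Function.update_of_ne (ne_of_mem_erase hj)]
  have e2 : ∀ x : ι → Bool, ∏ j, ν j (x j) = ν i (x i) * ∏ j ∈ univ.erase i, ν j (x j) :=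
    fun x => (mul_prod_erase univ _ (mem_univ i)).symm
  have e3 : ∀ (x : ι → Bool) (b : Bool),
      ∏ j ∈ univ.erase i, ν j (Function.update x i b j) = ∏ j ∈ univ.erase i, ν j (x j) :=
    fun x b => prod_congr rfl fun j hj => by rw [Function.update_of_ne (ne_of_mem_erase hj)]
  have lhs : ∑ x : ι → Bool, (∏ j, Function.update ν i ε j (x j)) * F x =
      ∑ q : (ι → Bool) × Bool, ε (q.1 i) * (∏ j ∈ univ.erase i, ν j (q.1 j)) * F q.1 * ν i q.2 := by
    rw [Fintype.sum_prod_type]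
    refine sum_congr rfl fun x _ => ?_
    simp only
    rw [← mul_sum, hi, mul_one, e1]
  have rhs : ∑ x : ι → Bool, (∏ j, ν j (x j)) * ∑ b, ε b * F (Function.update x i b) =
      ∑ q : (ι → Bool) × Bool, (∏ j, ν j (q.1 j)) * (ε q.2 * F (Function.update q.1 i q.2)) := by
    rw [Fintype.sum_prod_type]
    exact sum_congr rfl fun x _ => mul_sum _ _ _
  rw [lhs, rhs]
  refine sum_nbij' (fun q => (Function.update q.1 i q.2, q.1 i))
    (fun q => (Function.update q.1 i q.2, q.1 i)) (by simp) (by simp) ?_ ?_ ?_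
  · intro q _; simp
  · intro q _; simp
  · intro q _
    simp only [e2, e3, Function.update_self, Function.update_idem, Function.update_eq_self]
    ring

lemma ex_resample (t : ℝ) (i : ι) (F : (ι → Bool) → ℝ) :
    ex t F = ex t (fun x => t * F (Function.update x i true)
      + (1 - t) * F (Function.update x i false)) := by
  have := sum_weight_update (fun _ : ι => bw t) i (bw_sum t) (bw t) F
  rw [Function.update_eq_self] at this
  simpa [ex, bw] using this

/-- Russo's formula. -/
lemma ex_hasDerivAt (F : (ι → Bool) → ℝ) (t : ℝ) :
    HasDerivAt (fun t => ex t F)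
      (∑ i, ex t (fun x => F (Function.update x i true) - F (Function.update x i false))) t := by
  have hb : ∀ b, HasDerivAt (fun t => bw t b) (if b then 1 else -1) t := by
    intro b
    cases b
    · simpa [bw] using (hasDerivAt_id' t).const_sub 1
    · simpa [bw] using hasDerivAt_id' t
  have h1 : ∀ x : ι → Bool, HasDerivAt (fun t => (∏ i, bw t (x i)) * F x)
      ((∑ i, (∏ j ∈ univ.erase i, bw t (x j)) • (if x i then (1:ℝ) else -1)) * F x) t := by
    intro x
    exact (HasDerivAt.fun_finsetProd (u := univ) (f := fun i t => bw t (x i))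
      (fun i _ => hb (x i))).mul_const _
  have h2 := HasDerivAt.fun_sum (u := univ) fun x _ => h1 x
  unfold ex
  refine h2.congr_deriv ?_
  simp only [sum_mul]
  rw [sum_comm]
  refine sum_congr rfl fun i _ => ?_
  have := sum_weight_update (fun _ : ι => bw t) i (bw_sum t) (fun b => if b then 1 else -1) F
  convert this using 2 with x _ x _
  · rw [← mul_prod_erase univ _ (mem_univ i)]
    simp only [Function.update_self, smul_eq_mul]
    rw [mul_comm (∏ j ∈ univ.erase i, bw t (x j))]
    congr 2
    exact prod_congr rfl fun j hj => by rw [Function.update_of_ne (ne_of_mem_erase hj)]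
  · simp; left; ring

lemma ex_mono_param {F : (ι → Bool) → ℝ}
    (hF : ∀ x i, F (Function.update x i false) ≤ F (Function.update x i true)) :
    MonotoneOn (fun t => ex t F) (Set.Icc 0 1) := by
  apply monotoneOn_of_deriv_nonneg (convex_Icc 0 1)
  · exact fun t _ => (ex_hasDerivAt F t).continuousAt.continuousWithinAt
  · exact fun t _ => (ex_hasDerivAt F t).differentiableAt.differentiableWithinAt
  · intro t ht
    rw [interior_Icc] at ht
    rw [(ex_hasDerivAt F t).deriv]
    exact sum_nonneg fun i _ => ex_nonneg ht.1.le ht.2.le fun x => sub_nonneg.2 (hF x i)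

lemma ex_continuous (F : (ι → Bool) → ℝ) : Continuous fun t => ex t F :=
  continuous_iff_continuousAt.2 fun t => (ex_hasDerivAt F t).continuousAt

end Expectation

/-! ### Biased Fourier analysis -/

/-- The normalised (mean `0`, variance `1`) Bernoulli variable of parameter `t`. -/
noncomputable def phi (t : ℝ) (b : Bool) : ℝ := (if b then 1 - t else -t) / √(t * (1 - t))

/-- The `t`-biased Walsh character indexed by `T`. -/
noncomputable def chi {ι : Type} (t : ℝ) (T : Finset ι) (x : ι → Bool) : ℝ :=
  ∏ i ∈ T, phi t (x i)

/-- The `t`-biased Fourier coefficient of `f` at `T`. -/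
noncomputable def fc {ι : Type} [Fintype ι] [DecidableEq ι] (t : ℝ) (f : (ι → Bool) → ℝ)
    (T : Finset ι) : ℝ := ex t (fun x => f x * chi t T x)

/-- The fourth moment of `phi t`. -/
noncomputable def kap (t : ℝ) : ℝ := t * phi t true ^ 4 + (1 - t) * phi t false ^ 4

section Fourier
variable {ι : Type} [Fintype ι] [DecidableEq ι] {t : ℝ}

lemma phi_mean (t : ℝ) : t * phi t true + (1 - t) * phi t false = 0 := by
  simp only [phi]; simp; ring

lemma phi_sq (h0 : 0 < t) (h1 : t < 1) :
    t * phi t true ^ 2 + (1 - t) * phi t false ^ 2 = 1 := by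
  have hp : 0 < t * (1 - t) := mul_pos h0 (by linarith)
  simp only [phi, div_pow, Real.sq_sqrt hp.le]
  have h2 : (1 - t) ≠ 0 := by linarith
  simp
  field_simp
  ring

lemma phi_kernel (h0 : 0 < t) (h1 : t < 1) (a b : Bool) :
    bw t a * (1 + phi t a * phi t b) = if a = b then 1 else 0 := by
  have hp : 0 < t * (1 - t) := mul_pos h0 (by linarith)
  have h2 : (1 - t) ≠ 0 := by linarith
  simp only [phi, div_mul_div_comm, Real.mul_self_sqrt hp.le]
  cases a <;> cases b <;> simp [bw] <;> field_simp
  · ring1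
  · simp
  · simp
  · ring1

lemma chi_ortho (h0 : 0 < t) (h1 : t < 1) (S T : Finset ι) :
    ex t (fun x => chi t S x * chi t T x) = if S = T then 1 else 0 := by
  have e : ∀ x : ι → Bool, chi t S x * chi t T x =
      ∏ i, (if i ∈ S then phi t (x i) else 1) * (if i ∈ T then phi t (x i) else 1) := by
    intro x
    rw [prod_mul_distrib]
    simp [chi, prod_ite_mem]
  simp only [e]
  rw [ex_prod t (fun i b => (if i ∈ S then phi t b else 1) * (if i ∈ T then phi t b else 1))]
  have m := phi_mean t
  have v := phi_sq h0 h1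
  split_ifs with h
  · subst h
    refine prod_eq_one fun i _ => ?_
    by_cases hi : i ∈ S <;> simp [hi, bw]
    linarith
  · have : ∃ i, (i ∈ S ∧ i ∉ T) ∨ (i ∉ S ∧ i ∈ T) := by
      by_contra hc
      push Not at hc
      exact h (Finset.ext fun i => ⟨fun a => (hc i).1 a, fun a => by
        by_contra hb; exact (hc i).2 hb a⟩)
    obtain ⟨i, hi⟩ := this
    refine prod_eq_zero (mem_univ i) ?_
    rcases hi with ⟨a, b⟩ | ⟨a, b⟩ <;> simp [a, b, bw] <;> linarith

lemma fc_expand (h0 : 0 < t) (h1 : t < 1) (f : (ι → Bool) → ℝ) (y : ι → Bool) :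
    f y = ∑ T, fc t f T * chi t T y := by
  have k : ∀ x : ι → Bool, (∏ i, bw t (x i)) * ∑ T, chi t T x * chi t T y =
      if x = y then 1 else 0 := by
    intro x
    have : ∑ T : Finset ι, chi t T x * chi t T y = ∏ i, (1 + phi t (x i) * phi t (y i)) := by
      rw [prod_one_add]
      simp [chi, prod_mul_distrib]
    rw [this, ← prod_mul_distrib]
    simp only [phi_kernel h0 h1]
    by_cases h : x = y
    · simp [h]
    · rw [if_neg h]
      obtain ⟨i, hi⟩ := Function.ne_iff.1 h
      exact prod_eq_zero (mem_univ i) (by simp [hi])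
  have : ∑ T, fc t f T * chi t T y =
      ∑ x : ι → Bool, f x * ((∏ i, bw t (x i)) * ∑ T, chi t T x * chi t T y) := by
    simp only [fc, ex, sum_mul, mul_sum]
    rw [sum_comm]
    exact sum_congr rfl fun x _ => sum_congr rfl fun T _ => by ring
  rw [this]
  simp [k]

/-- Correlation of two copies of `f` that share exactly the coordinates where `j₁ = j₂`. -/
lemma ex_two_copies (h0 : 0 < t) (h1 : t < 1) {κ : Type} [Fintype κ] [DecidableEq κ]
    (f : (ι → Bool) → ℝ) (j₁ j₂ : ι → κ) (hj₁ : Function.Injective j₁)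
    (hj₂ : Function.Injective j₂) (hj : ∀ u v, j₁ u = j₂ v → u = v) :
    ex t (fun X : κ → Bool => f (X ∘ j₁) * f (X ∘ j₂)) =
      ∑ T : Finset ι, if ∀ v ∈ T, j₁ v = j₂ v then fc t f T ^ 2 else 0 := by
  have hc : ∀ (j : ι → κ), Function.Injective j → ∀ (T : Finset ι) (X : κ → Bool),
      chi t T (X ∘ j) = chi t (T.image j) X := by
    intro j hj T X
    simp only [chi]
    rw [prod_image fun a _ b _ h => hj h]
    rfl
  have e : ∀ X : κ → Bool, f (X ∘ j₁) * f (X ∘ j₂) =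
      ∑ S : Finset ι, ∑ T : Finset ι, fc t f S * fc t f T *
        (chi t (S.image j₁) X * chi t (T.image j₂) X) := by
    intro X
    rw [fc_expand h0 h1 f (X ∘ j₁), fc_expand h0 h1 f (X ∘ j₂), sum_mul_sum]
    refine sum_congr rfl fun S _ => sum_congr rfl fun T _ => ?_
    rw [hc j₁ hj₁, hc j₂ hj₂]
    ring
  simp only [e, ex_sum, ex_const_mul, chi_ortho h0 h1]
  refine sum_congr rfl fun S _ => ?_
  have key : ∀ T : Finset ι, S.image j₁ = T.image j₂ ↔ T = S ∧ ∀ v ∈ S, j₁ v = j₂ v := by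
    intro T
    constructor
    · intro h
      have a : ∀ v ∈ S, v ∈ T ∧ j₁ v = j₂ v := by
        intro v hv
        have : j₁ v ∈ T.image j₂ := h ▸ mem_image_of_mem _ hv
        obtain ⟨u, hu, hu2⟩ := mem_image.1 this
        have := hj _ _ hu2.symm
        subst this
        exact ⟨hu, hu2.symm⟩
      refine ⟨Finset.ext fun v => ⟨fun hv => ?_, fun hv => (a v hv).1⟩, fun v hv => (a v hv).2⟩
      have : j₂ v ∈ S.image j₁ := h ▸ mem_image_of_mem _ hv
      obtain ⟨u, hu, hu2⟩ := mem_image.1 this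
      have := hj _ _ hu2
      subst this
      exact hu
    · rintro ⟨rfl, h⟩
      exact image_congr fun v hv => h v hv
  simp only [key]
  split_ifs with h
  · rw [sum_eq_single S]
    · rw [if_pos ⟨rfl, h⟩]; ring
    · intro T _ hT; simp [hT]
    · simp
  · refine sum_eq_zero fun T _ => ?_
    rw [if_neg (by tauto), mul_zero]

lemma parseval (h0 : 0 < t) (h1 : t < 1) (f : (ι → Bool) → ℝ) :
    ex t (fun x => f x ^ 2) = ∑ T, fc t f T ^ 2 := by
  have := ex_two_copies h0 h1 f id id Function.injective_id Function.injective_id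
    (fun u v h => h)
  simpa [sq] using this

lemma fc_empty (f : (ι → Bool) → ℝ) : fc t f ∅ = ex t f := by simp [fc, chi]

lemma kap_nonneg (h0 : 0 < t) (h1 : t < 1) : 0 ≤ kap t := by
  have : 0 ≤ 1 - t := by linarith
  unfold kap; positivity

lemma chi_update {T : Finset ι} {i : ι} (hi : i ∉ T) (x : ι → Bool) (b : Bool) :
    chi t T (Function.update x i b) = chi t T x := by
  refine prod_congr rfl fun j hj => ?_
  rw [Function.update_of_ne]
  rintro rfl
  exact hi hj

/-- Bonami's inequality between the fourth and the second norm, for biased bits. The weight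
`(4 + 3 kap t) ^ |T|` replaces the usual restriction to low degree. -/
lemma bonami (h0 : 0 < t) (h1 : t < 1) (s : Finset ι) (c : Finset ι → ℝ) :
    ex t (fun x => (∑ T ∈ s.powerset, c T * chi t T x) ^ 4) ≤
      (∑ T ∈ s.powerset, (4 + 3 * kap t) ^ #T * c T ^ 2) ^ 2 := by
  induction s using Finset.induction_on generalizing c with
  | empty => simp [chi, ex_const]; exact le_of_eq (by ring)
  | insert i s hi ih =>
    set κ := kap t with hκ
    have hκ0 : 0 ≤ κ := kap_nonneg h0 h1
    set g : (ι → Bool) → ℝ := fun x => ∑ T ∈ s.powerset, c T * chi t T x with hg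
    set e : (ι → Bool) → ℝ := fun x => ∑ T ∈ s.powerset, c (insert i T) * chi t T x with he
    set G := ∑ T ∈ s.powerset, (4 + 3 * κ) ^ #T * c T ^ 2 with hG
    set E := ∑ T ∈ s.powerset, (4 + 3 * κ) ^ #T * c (insert i T) ^ 2 with hE
    have hG0 : 0 ≤ G := sum_nonneg fun _ _ => by positivity
    have hE0 : 0 ≤ E := sum_nonneg fun _ _ => by positivity
    have split : ∀ x, ∑ T ∈ (insert i s).powerset, c T * chi t T x = g x + phi t (x i) * e x := by
      intro x
      rw [sum_powerset_insert hi, hg, he, mul_sum]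
      congr 1
      refine sum_congr rfl fun T hT => ?_
      have hiT : i ∉ T := fun h => hi (mem_powerset.1 hT h)
      simp only [chi, prod_insert hiT]
      ring
    have rsplit : ∑ T ∈ (insert i s).powerset, (4 + 3 * κ) ^ #T * c T ^ 2 =
        G + (4 + 3 * κ) * E := by
      rw [sum_powerset_insert hi, hG, hE, mul_sum]
      congr 1
      refine sum_congr rfl fun T hT => ?_
      have hiT : i ∉ T := fun h => hi (mem_powerset.1 hT h)
      rw [card_insert_of_notMem hiT]
      ring
    have gu : ∀ x b, g (Function.update x i b) = g x := fun x b =>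
      sum_congr rfl fun T hT => by rw [chi_update fun h => hi (mem_powerset.1 hT h)]
    have eu : ∀ x b, e (Function.update x i b) = e x := fun x b =>
      sum_congr rfl fun T hT => by rw [chi_update fun h => hi (mem_powerset.1 hT h)]
    have hm := phi_mean t
    have hv := phi_sq h0 h1
    simp only [split, rsplit]
    rw [ex_resample t i]
    simp only [gu, eu, Function.update_self]
    have pt : ∀ x, t * (g x + phi t true * e x) ^ 4 + (1 - t) * (g x + phi t false * e x) ^ 4 ≤
        g x ^ 4 + (8 * (g x ^ 2 * e x ^ 2) + 3 * κ * e x ^ 4) := by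
      intro x
      have two : ∀ a u v : ℝ, (u + a * v) ^ 4 ≤
          u ^ 4 + 4 * u ^ 3 * v * a + 8 * (u ^ 2 * v ^ 2) * a ^ 2 + 3 * v ^ 4 * a ^ 4 := by
        intro a u v
        nlinarith [sq_nonneg (u * v * a - (v * a) ^ 2)]
      have a1 := mul_le_mul_of_nonneg_left (two (phi t true) (g x) (e x)) h0.le
      have a2 := mul_le_mul_of_nonneg_left (two (phi t false) (g x) (e x))
        (by linarith : (0:ℝ) ≤ 1 - t)
      refine (add_le_add a1 a2).trans (le_of_eq ?_)
      rw [hκ, kap]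
      linear_combination 4 * g x ^ 3 * e x * hm + 8 * (g x ^ 2 * e x ^ 2) * hv
    refine (ex_mono h0.le h1.le pt).trans ?_
    rw [ex_add, ex_add, ex_const_mul, ex_const_mul]
    have i1 : ex t (fun x => g x ^ 4) ≤ G ^ 2 := ih c
    have i2 : ex t (fun x => e x ^ 4) ≤ E ^ 2 := ih fun T => c (insert i T)
    have i3 : ex t (fun x => g x ^ 2 * e x ^ 2) ≤ G * E := by
      have cs := ex_cauchy h0.le h1.le (fun x => g x ^ 2) (fun x => e x ^ 2)
      simp only [← pow_mul, Nat.reduceMul] at cs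
      refine abs_le_of_sq_le_sq' ?_ (mul_nonneg hG0 hE0) |>.2
      refine cs.trans ?_
      rw [mul_pow]
      exact mul_le_mul i1 i2 (ex_nonneg h0.le h1.le fun x => by positivity) (by positivity)
    have p1 : 0 ≤ G * E := mul_nonneg hG0 hE0
    have p2 : 0 ≤ E ^ 2 := sq_nonneg _
    nlinarith [mul_le_mul_of_nonneg_left i2 hκ0, mul_nonneg hκ0 p1, mul_nonneg hκ0 p2,
      mul_nonneg (mul_nonneg hκ0 hκ0) p2]

/-- Level inequality: a Boolean function of small mean has little Fourier weight at low levels. -/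
lemma level_ineq (h0 : 0 < t) (h1 : t < 1) (f : (ι → Bool) → ℝ) (hf : ∀ x, f x ^ 2 = f x)
    (D : ℕ) :
    (∑ T : Finset ι, if #T ≤ D then fc t f T ^ 2 else 0) ^ 2 ≤
      ex t f ^ 3 * ((4 + 3 * kap t) ^ D) ^ 2 := by
  set B := 4 + 3 * kap t with hB
  have hB1 : 1 ≤ B := by have := kap_nonneg h0 h1; linarith
  set W := ∑ T : Finset ι, if #T ≤ D then fc t f T ^ 2 else 0 with hW
  have hW0 : 0 ≤ W := sum_nonneg fun T _ => by split_ifs <;> positivity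
  have hf0 : ∀ x, 0 ≤ f x := fun x => hf x ▸ sq_nonneg _
  have hh0 : 0 ≤ ex t f := ex_nonneg h0.le h1.le hf0
  let c : Finset ι → ℝ := fun T => if #T ≤ D then fc t f T else 0
  set F : (ι → Bool) → ℝ := fun x => ∑ T ∈ univ.powerset, c T * chi t T x with hF
  have e1 : ex t (fun x => f x * F x) = W := by
    simp only [hF, mul_sum, ex_sum, hW, powerset_univ]
    refine sum_congr rfl fun T _ => ?_
    have : (fun x => f x * (c T * chi t T x)) = fun x => c T * (f x * chi t T x) := by
      funext x; ring
    rw [this, ex_const_mul]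
    simp only [c]
    split_ifs
    · rw [← fc]; ring
    · simp
  have e2 : ex t (fun x => F x ^ 4) ≤ (B ^ D * W) ^ 2 := by
    refine (bonami h0 h1 univ c).trans ?_
    refine pow_le_pow_left₀ (sum_nonneg fun T _ => by positivity) ?_ 2
    rw [hW, mul_sum, powerset_univ]
    refine sum_le_sum fun T _ => ?_
    simp only [c]
    split_ifs with h
    · exact mul_le_mul_of_nonneg_right (pow_le_pow_right₀ hB1 h) (sq_nonneg _)
    · simp
  have c1 : W ^ 2 ≤ ex t f * ex t (fun x => f x * F x ^ 2) := by
    have := ex_cauchy h0.le h1.le f (fun x => f x * F x)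
    have r1 : ∀ x, f x * (f x * F x) = f x * F x := fun x => by rw [← mul_assoc, ← sq, hf]
    simp only [r1, mul_pow, hf, e1] at this
    exact this
  have c2 : ex t (fun x => f x * F x ^ 2) ^ 2 ≤ ex t f * ex t (fun x => F x ^ 4) := by
    have := ex_cauchy h0.le h1.le f (fun x => F x ^ 2)
    simp only [hf, ← pow_mul, Nat.reduceMul] at this
    exact this
  rcases hW0.eq_or_lt with h | h
  · rw [← h, zero_pow two_ne_zero]; positivity
  · have q0 : 0 ≤ ex t (fun x => f x * F x ^ 2) :=
      ex_nonneg h0.le h1.le fun x => mul_nonneg (hf0 x) (sq_nonneg _)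
    have s1 : (W ^ 2) ^ 2 ≤ ex t f ^ 2 * (ex t f * (B ^ D * W) ^ 2) := by
      calc (W ^ 2) ^ 2 ≤ (ex t f * ex t (fun x => f x * F x ^ 2)) ^ 2 :=
            pow_le_pow_left₀ (sq_nonneg _) c1 2
        _ = ex t f ^ 2 * ex t (fun x => f x * F x ^ 2) ^ 2 := by ring
        _ ≤ ex t f ^ 2 * (ex t f * (B ^ D * W) ^ 2) := by
            refine mul_le_mul_of_nonneg_left (c2.trans ?_) (sq_nonneg _)
            exact mul_le_mul_of_nonneg_left e2 hh0
    have hW2 : 0 < W ^ 2 := by positivity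
    refine le_of_mul_le_mul_right ?_ hW2
    calc W ^ 2 * W ^ 2 = (W ^ 2) ^ 2 := by ring
      _ ≤ _ := s1
      _ = ex t f ^ 3 * (B ^ D) ^ 2 * W ^ 2 := by ring

end Fourier

/-! ### Partition functions of linear codes and random erasures -/

open scoped Classical in
/-- The partition function `∑_{c ∈ C} ∏_{i ∈ supp c} w i` of a code. -/
noncomputable def ZC {ι : Type} [Fintype ι] [DecidableEq ι] (C : Submodule (ZMod 2) (ι → ZMod 2))
    (w : ι → ℝ) : ℝ :=
  ∑ c : ι → ZMod 2, if c ∈ C then ∏ i, (if c i = 0 then 1 else w i) else 0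

open scoped Classical in
/-- The part of the partition function carried by the codewords that vanish at `i`, with the
factor at `i` left out. -/
noncomputable def ZA {ι : Type} [Fintype ι] [DecidableEq ι] (C : Submodule (ZMod 2) (ι → ZMod 2))
    (w : ι → ℝ) (i : ι) : ℝ :=
  ∑ c : ι → ZMod 2,
    if c ∈ C ∧ c i = 0 then ∏ j ∈ univ.erase i, (if c j = 0 then 1 else w j) else 0

open scoped Classical in
/-- The part of the partition function carried by the codewords that do not vanish at `i`, with
the factor at `i` left out. -/
noncomputable def ZB {ι : Type} [Fintype ι] [DecidableEq ι] (C : Submodule (ZMod 2) (ι → ZMod 2))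
    (w : ι → ℝ) (i : ι) : ℝ :=
  ∑ c : ι → ZMod 2,
    if c ∈ C ∧ c i ≠ 0 then ∏ j ∈ univ.erase i, (if c j = 0 then 1 else w j) else 0

/-- The `0/1` weight of an erasure pattern `x` (`true` means erased). -/
def iw {ι : Type} (x : ι → Bool) (i : ι) : ℝ := if x i then 1 else 0

/-- Bit `i` cannot be recovered from the unerased bits other than `i` itself: some codeword is
`1` at `i` and vanishes at all other unerased positions. -/
def Cov {ι : Type} (C : Submodule (ZMod 2) (ι → ZMod 2)) (i : ι) (x : ι → Bool) : Prop :=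
  ∃ c ∈ C, c i = 1 ∧ ∀ j, j ≠ i → x j = false → c j = 0

open scoped Classical in
/-- The indicator of `Cov`. -/
noncomputable def covI {ι : Type} (C : Submodule (ZMod 2) (ι → ZMod 2)) (i : ι) (x : ι → Bool) :
    ℝ := if Cov C i x then 1 else 0

section Codes
variable {ι : Type} [Fintype ι] [DecidableEq ι] (C : Submodule (ZMod 2) (ι → ZMod 2))

lemma zmod2_ne_zero : ∀ a : ZMod 2, a ≠ 0 ↔ a = 1 := by decide

lemma zmod2_add_one : ∀ a : ZMod 2, a + 1 = 0 ↔ a ≠ 0 := by decide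

lemma ZC_update (w : ι → ℝ) (i : ι) (a : ℝ) :
    ZC C (Function.update w i a) = ZA C w i + a * ZB C w i := by
  classical
  simp only [ZC, ZA, ZB, mul_sum, ← sum_add_distrib]
  refine sum_congr rfl fun c _ => ?_
  by_cases hc : c ∈ C
  · rw [if_pos hc, ← mul_prod_erase univ _ (mem_univ i)]
    have : ∏ j ∈ univ.erase i, (if c j = 0 then 1 else Function.update w i a j) =
        ∏ j ∈ univ.erase i, (if c j = 0 then 1 else w j) :=
      prod_congr rfl fun j hj => by rw [Function.update_of_ne (ne_of_mem_erase hj)]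
    rw [this]
    by_cases h : c i = 0 <;> simp [h, hc]
  · simp [hc]

lemma ZA_pos {w : ι → ℝ} (hw : ∀ i, 0 ≤ w i) (i : ι) : 0 < ZA C w i := by
  classical
  have hn : ∀ c : ι → ZMod 2, 0 ≤ if c ∈ C ∧ c i = 0 then
      ∏ j ∈ univ.erase i, (if c j = 0 then 1 else w j) else 0 := by
    intro c
    split_ifs
    · exact prod_nonneg fun j _ => by split_ifs <;> simp [hw]
    · exact le_rfl
  refine lt_of_lt_of_le one_pos ?_
  refine le_trans ?_ (single_le_sum (fun c _ => hn c) (mem_univ (0 : ι → ZMod 2)))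
  simp

lemma ZB_nonneg {w : ι → ℝ} (hw : ∀ i, 0 ≤ w i) (i : ι) : 0 ≤ ZB C w i := by
  classical
  refine sum_nonneg fun c _ => ?_
  split_ifs
  · exact prod_nonneg fun j _ => by split_ifs <;> simp [hw]
  · exact le_rfl

lemma ZB_iw (x : ι → Bool) (i : ι) : ZB C (iw x) i = covI C i x * ZA C (iw x) i := by
  classical
  rw [covI]
  split_ifs with h
  · obtain ⟨c₀, h₀, hi, hj⟩ := h
    rw [one_mul]
    refine Fintype.sum_equiv (Equiv.addRight c₀) _ _ fun c => ?_
    have m : c ∈ C ∧ c i ≠ 0 ↔ c + c₀ ∈ C ∧ (c + c₀) i = 0 := by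
      rw [Submodule.add_mem_iff_left C h₀, Pi.add_apply, hi, zmod2_add_one]
    have p : ∏ j ∈ univ.erase i, (if c j = 0 then 1 else iw x j) =
        ∏ j ∈ univ.erase i, (if (c + c₀) j = 0 then 1 else iw x j) := by
      refine prod_congr rfl fun j hj' => ?_
      cases hx : x j
      · rw [Pi.add_apply, hj j (ne_of_mem_erase hj') hx, add_zero]
      · simp [iw, hx]
    have ec : (Equiv.addRight c₀) c = c + c₀ := rfl
    rw [ec]
    by_cases hm : c + c₀ ∈ C ∧ (c + c₀) i = 0
    · rw [if_pos (m.2 hm), if_pos hm, p]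
    · rw [if_neg (mt m.1 hm), if_neg hm]
  · rw [zero_mul]
    refine sum_eq_zero fun c _ => ?_
    split_ifs with hc
    · by_contra hne
      refine h ⟨c, hc.1, (zmod2_ne_zero _).1 hc.2, fun j hji hx => ?_⟩
      by_contra hcj
      exact hne (prod_eq_zero (mem_erase.2 ⟨hji, mem_univ j⟩) (by simp [hcj, iw, hx]))
    · rfl

lemma covI_le_one (i : ι) (x : ι → Bool) : covI C i x ≤ 1 := by
  rw [covI]; split_ifs <;> norm_num

lemma covI_nonneg (i : ι) (x : ι → Bool) : 0 ≤ covI C i x := by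
  rw [covI]; split_ifs <;> norm_num

/-- Codewords with `c i = 1` carry at most as much weight as those with `c i = 0`: the weight is a
mixture of indicators of subspaces, and on a subspace this is a statement about cosets. -/
lemma ZB_le_ZA {w : ι → ℝ} (h0 : ∀ i, 0 ≤ w i) (h1 : ∀ i, w i ≤ 1) (i : ι) :
    ZB C w i ≤ ZA C w i := by
  classical
  have mix : ∀ c : ι → ZMod 2, ∏ j ∈ univ.erase i, (if c j = 0 then 1 else w j) =
      ∑ x : ι → Bool, (∏ j, bw (w j) (x j)) *
        ∏ j ∈ univ.erase i, (if c j = 0 then 1 else iw x j) := by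
    intro c
    have e : ∀ x : ι → Bool, (∏ j, bw (w j) (x j)) *
        ∏ j ∈ univ.erase i, (if c j = 0 then 1 else iw x j) =
        ∏ j, bw (w j) (x j) *
          (if j ∈ univ.erase i then (if c j = 0 then 1 else if x j then 1 else 0) else 1) := by
      intro x
      rw [prod_mul_distrib, prod_ite_mem, univ_inter]
      rfl
    simp only [e]
    have := prod_univ_sum (fun _ : ι => (univ : Finset Bool)) (fun j b => bw (w j) b *
          (if j ∈ univ.erase i then (if c j = 0 then 1 else if b then 1 else 0) else 1))
    rw [Fintype.piFinset_univ] at this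
    rw [← this, ← mul_prod_erase univ _ (mem_univ i)]
    have hi : ∑ b, bw (w i) b * (if i ∈ univ.erase i then
        (if c i = 0 then 1 else if b then (1:ℝ) else 0) else 1) = 1 := by simp [bw]
    rw [hi, one_mul]
    refine prod_congr rfl fun j hj => ?_
    by_cases hc : c j = 0 <;> simp [hc, hj, bw]
  have mA : ZA C w i = ∑ x : ι → Bool, (∏ j, bw (w j) (x j)) * ZA C (iw x) i := by
    simp only [ZA, mix, mul_sum]
    rw [sum_comm]
    exact sum_congr rfl fun c _ => by split_ifs <;> simp
  have mB : ZB C w i = ∑ x : ι → Bool, (∏ j, bw (w j) (x j)) * ZB C (iw x) i := by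
    simp only [ZB, mix, mul_sum]
    rw [sum_comm]
    exact sum_congr rfl fun c _ => by split_ifs <;> simp
  rw [mA, mB]
  refine sum_le_sum fun x _ => mul_le_mul_of_nonneg_left ?_
    (prod_nonneg fun j _ => bw_nonneg (h0 j) (h1 j) _)
  rw [ZB_iw]
  have := ZA_pos C (w := iw x) (fun j => by unfold iw; split_ifs <;> norm_num) i
  nlinarith [covI_le_one C i x]

lemma iw_nonneg (x : ι → Bool) (i : ι) : 0 ≤ iw x i := by unfold iw; split_ifs <;> norm_num

lemma iw_le_one (x : ι → Bool) (i : ι) : iw x i ≤ 1 := by unfold iw; split_ifs <;> norm_num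

lemma log_interp {A B θ : ℝ} (hA : 0 < A) (hB : 0 ≤ B) (hBA : B ≤ A) (h0 : 0 ≤ θ) (h1 : θ ≤ 1) :
    Real.log (A + θ * B) ≤
      Real.logb 2 (1 + θ) * Real.log (A + B) + (1 - Real.logb 2 (1 + θ)) * Real.log A := by
  set l := Real.logb 2 (1 + θ) with hl
  have l0 : 0 ≤ l := Real.logb_nonneg one_lt_two (by linarith)
  have l1 : l ≤ 1 := by
    rw [hl, Real.logb_le_iff_le_rpow one_lt_two (by linarith)]; norm_num; linarith
  set u := B / A with hu
  have u0 : 0 ≤ u := div_nonneg hB hA.le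
  have u1 : u ≤ 1 := (div_le_one hA).2 hBA
  have hBu : B = A * u := by rw [hu]; field_simp
  have conc := (Real.concaveOn_rpow l0 l1).2 (show (1:ℝ) ∈ Set.Ici 0 by simp)
    (show (2:ℝ) ∈ Set.Ici 0 by simp) (show 0 ≤ 1 - u by linarith) u0 (by ring)
  have h2 : (2:ℝ) ^ l = 1 + θ := by
    rw [hl, Real.rpow_logb (by norm_num) (by norm_num) (by linarith)]
  simp only [smul_eq_mul, Real.one_rpow, h2] at conc
  have c2 : 1 + θ * u ≤ (1 + u) ^ l := by
    have e3 : (1 - u) * 1 + u * 2 = 1 + u := by ring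
    rw [e3] at conc
    linarith
  have hlog : Real.log (1 + θ * u) ≤ l * Real.log (1 + u) := by
    rw [← Real.log_rpow (by linarith)]
    exact Real.log_le_log (by positivity) c2
  have e1 : A + θ * B = A * (1 + θ * u) := by rw [hBu]; ring
  have e2 : A + B = A * (1 + u) := by rw [hBu]; ring
  rw [e1, e2, Real.log_mul hA.ne' (by positivity), Real.log_mul hA.ne' (by positivity)]
  linarith

/-- Comparison of the weight enumerator with random erasures: `log ∑_{c ∈ C} θ ^ |c|` is at most
the expected log-size of the subcode supported on a random set of density `log₂ (1 + θ)`. -/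
lemma log_ZC_le {θ : ℝ} (h0 : 0 ≤ θ) (h1 : θ ≤ 1) :
    Real.log (ZC C fun _ => θ) ≤
      ex (Real.logb 2 (1 + θ)) (fun x : ι → Bool => Real.log (ZC C (iw x))) := by
  set l := Real.logb 2 (1 + θ) with hl
  have l0 : 0 ≤ l := Real.logb_nonneg one_lt_two (by linarith)
  have l1 : l ≤ 1 := by
    rw [hl, Real.logb_le_iff_le_rpow one_lt_two (by linarith)]; norm_num; linarith
  have key : ∀ J : Finset ι, Real.log (ZC C fun _ => θ) ≤
      ex l (fun x : ι → Bool => Real.log (ZC C fun i => if i ∈ J then iw x i else θ)) := by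
    intro J
    induction J using Finset.induction_on with
    | empty => simp [ex_const]
    | insert i J hi ih =>
      refine ih.trans ?_
      rw [ex_resample l i (fun x => Real.log (ZC C fun k => if k ∈ insert i J then iw x k else θ))]
      refine ex_mono l0 l1 fun x => ?_
      set w : ι → ℝ := fun k => if k ∈ J then iw x k else θ with hw
      have w0 : ∀ k, 0 ≤ w k := fun k => by
        simp only [hw]; split_ifs
        · exact iw_nonneg x k
        · exact h0
      have w1 : ∀ k, w k ≤ 1 := fun k => by
        simp only [hw]; split_ifs
        · exact iw_le_one x k
        · exact h1
      have e : ∀ b, (fun k => if k ∈ insert i J then iw (Function.update x i b) k else θ) =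
          Function.update w i (if b then 1 else 0) := by
        intro b
        funext k
        by_cases hk : k = i
        · subst hk; simp [iw]
        · simp [hk, hw, iw]
      have e' : w = Function.update w i θ := by
        have : θ = w i := by simp [hw, hi]
        rw [this, Function.update_eq_self]
      have := log_interp (ZA_pos C w0 i) (ZB_nonneg C w0 i) (ZB_le_ZA C w0 w1 i) h0 h1
      rw [e, e, ZC_update, ZC_update]
      have ew : ZC C w = _ := (congrArg (ZC C) e').trans (ZC_update C w i θ)
      rw [ew]
      simpa [← hl] using this
  simpa using key univ

lemma log_ZC_diff (x : ι → Bool) (i : ι) :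
    Real.log (ZC C (iw (Function.update x i true))) -
      Real.log (ZC C (iw (Function.update x i false))) = Real.log 2 * covI C i x := by
  have e : ∀ b, iw (Function.update x i b) = Function.update (iw x) i (if b then 1 else 0) := by
    intro b
    funext k
    by_cases hk : k = i
    · subst hk; simp [iw]
    · simp [hk, iw]
  have hA := ZA_pos C (iw_nonneg x) i
  rw [e, e, ZC_update, ZC_update, ZB_iw]
  by_cases h : Cov C i x
  · simp only [covI, h, if_true, one_mul, mul_one, zero_mul, add_zero, Bool.false_eq_true, if_false]
    rw [← two_mul, Real.log_mul two_ne_zero hA.ne']; ring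
  · simp [covI, h]

lemma ex_zero (F : (ι → Bool) → ℝ) : ex 0 F = F fun _ => false := by
  rw [ex, sum_eq_single (fun _ => false)]
  · simp [bw]
  · intro x _ hx
    obtain ⟨i, hi⟩ := Function.ne_iff.1 hx
    rw [prod_eq_zero (mem_univ i), zero_mul]
    simp only [Bool.not_eq_false] at hi
    simp [bw, hi]
  · simp

lemma ex_one (F : (ι → Bool) → ℝ) : ex 1 F = F fun _ => true := by
  rw [ex, sum_eq_single (fun _ => true)]
  · simp [bw]
  · intro x _ hx
    obtain ⟨i, hi⟩ := Function.ne_iff.1 hx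
    rw [prod_eq_zero (mem_univ i), zero_mul]
    simp only [Bool.not_eq_true] at hi
    simp [bw, hi]
  · simp

lemma ZC_iw_false : ZC C (iw fun _ => false) = 1 := by
  classical
  rw [ZC, sum_eq_single 0]
  · simp
  · intro c _ hc
    split_ifs
    · obtain ⟨i, hi⟩ := Function.ne_iff.1 hc
      exact prod_eq_zero (mem_univ i) (by simp [iw]; simpa using hi)
    · rfl
  · simp

lemma log_ZC_iw_true :
    Real.log (ZC C (iw fun _ => true)) = Module.finrank (ZMod 2) C * Real.log 2 := by
  classical
  have : ZC C (iw fun _ => true) = (Fintype.card C : ℝ) := by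
    simp [ZC, iw, Fintype.card_subtype]
  rw [this, Module.card_eq_pow_finrank (K := ZMod 2)]
  simp [ZMod.card]

lemma hasDerivAt_logZ (t : ℝ) :
    HasDerivAt (fun t => ex t (fun x : ι → Bool => Real.log (ZC C (iw x))))
      (Real.log 2 * ∑ i, ex t (covI C i)) t := by
  refine (ex_hasDerivAt _ t).congr_deriv ?_
  simp only [log_ZC_diff, ex_const_mul, mul_sum]

lemma covI_mono (i : ι) : MonotoneOn (fun t => ex t (covI C i)) (Set.Icc 0 1) := by
  refine ex_mono_param fun x j => ?_
  simp only [covI]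
  have : Cov C i (Function.update x j false) → Cov C i (Function.update x j true) := by
    rintro ⟨c, hc, hi, h⟩
    refine ⟨c, hc, hi, fun k hk hx => h k hk ?_⟩
    by_cases hkj : k = j
    · subst hkj; simp
    · simpa [Function.update_of_ne hkj] using hx
  split_ifs <;> norm_num
  tauto

/-- The area theorem: Russo's formula for the expected log-size of the subcode supported on the
erased positions, integrated from no erasures to full erasure. -/
lemma area : ∑ i, ∫ t in (0:ℝ)..1, ex t (covI C i) = Module.finrank (ZMod 2) C := by
  have h := intervalIntegral.integral_eq_sub_of_hasDerivAt (a := 0) (b := 1)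
    (fun t _ => hasDerivAt_logZ C t)
    (Continuous.intervalIntegrable (continuous_const.mul
      (continuous_finsetSum _ fun i _ => ex_continuous (covI C i))) _ _)
  rw [ex_zero, ex_one, ZC_iw_false, log_ZC_iw_true, Real.log_one, sub_zero,
    intervalIntegral.integral_const_mul, intervalIntegral.integral_finsetSum] at h
  · have := Real.log_pos one_lt_two
    field_simp at h
    linarith
  · exact fun i _ => (ex_continuous (covI C i)).intervalIntegrable _ _

lemma log_ZC_le_cov {θ : ℝ} (h0 : 0 ≤ θ) (h1 : θ ≤ 1) :
    Real.log (ZC C fun _ => θ) ≤ Real.log 2 * ∑ i, ex (Real.logb 2 (1 + θ)) (covI C i) := by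
  refine (log_ZC_le C h0 h1).trans ?_
  set l := Real.logb 2 (1 + θ) with hl
  have l0 : 0 ≤ l := Real.logb_nonneg one_lt_two (by linarith)
  have l1 : l ≤ 1 := by
    rw [hl, Real.logb_le_iff_le_rpow one_lt_two (by linarith)]; norm_num; linarith
  set G := fun t => ex t (fun x : ι → Bool => Real.log (ZC C (iw x))) with hG
  have lp := Real.log_pos one_lt_two
  have mv := Convex.image_sub_le_mul_sub_of_deriv_le (convex_Icc 0 l) (f := G)
    (fun t _ => (hasDerivAt_logZ C t).continuousAt.continuousWithinAt)
    (fun t _ => (hasDerivAt_logZ C t).differentiableAt.differentiableWithinAt)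
    (C := Real.log 2 * ∑ i, ex l (covI C i))
    (by
      intro t ht
      rw [interior_Icc] at ht
      rw [(hasDerivAt_logZ C t).deriv]
      refine mul_le_mul_of_nonneg_left (sum_le_sum fun i _ => ?_) lp.le
      exact covI_mono C i ⟨ht.1.le, ht.2.le.trans l1⟩ ⟨l0, l1⟩ ht.2.le)
    0 ⟨le_rfl, l0⟩ l ⟨l0, le_rfl⟩ l0
  have g0 : G 0 = 0 := by simp only [hG]; rw [ex_zero, ZC_iw_false, Real.log_one]
  rw [g0, sub_zero, sub_zero] at mv
  refine mv.trans ?_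
  have : 0 ≤ Real.log 2 * ∑ i, ex l (covI C i) :=
    mul_nonneg lp.le (sum_nonneg fun i _ => ex_nonneg l0 l1 (covI_nonneg C i))
  nlinarith

end Codes

/-! ### Reed-Muller codes -/

/-- The squarefree monomial `∏_{i ∈ I} v i` as a function on the cube. -/
def monoI {σ : Type} (I : Finset σ) (v : σ → ZMod 2) : ZMod 2 := ∏ i ∈ I, v i

/-- The Reed-Muller code of degree `d` in variables indexed by `σ`, as the span of the squarefree
monomials of degree at most `d`. -/
def RMs (σ : Type) (d : ℕ) : Submodule (ZMod 2) ((σ → ZMod 2) → ZMod 2) :=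
  Submodule.span (ZMod 2) (monoI '' {I : Finset σ | #I ≤ d})

section RM
variable {σ τ : Type} [Fintype σ] [DecidableEq σ] [Fintype τ] [DecidableEq τ]

lemma monoI_mem {I : Finset σ} {d : ℕ} (h : #I ≤ d) : monoI I ∈ RMs σ d :=
  Submodule.subset_span ⟨I, h, rfl⟩

lemma RMs_mono {d e : ℕ} (h : d ≤ e) : RMs σ d ≤ RMs σ e :=
  Submodule.span_mono (Set.image_mono fun _ hI => le_trans hI h)

lemma zmod2_mul_self : ∀ a : ZMod 2, a * a = a := by decide

lemma zmod2_pow (a : ZMod 2) {n : ℕ} (hn : n ≠ 0) : a ^ n = a := by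
  induction n with
  | zero => exact absurd rfl hn
  | succ n ih =>
    by_cases h : n = 0
    · simp [h]
    · rw [pow_succ, ih h, zmod2_mul_self]

lemma monoI_mul (I J : Finset σ) : monoI I * monoI J = monoI (I ∪ J) := by
  funext v
  simp only [monoI, Pi.mul_apply]
  induction I using Finset.induction_on with
  | empty => simp
  | insert i I hi ih =>
    rw [prod_insert hi, mul_assoc, ih, insert_union]
    by_cases h : i ∈ I ∪ J
    · rw [insert_eq_of_mem h, ← mul_prod_erase _ _ h, ← mul_assoc, zmod2_mul_self]
    · rw [prod_insert h]

lemma RMs_mul {d e : ℕ} {f g : (σ → ZMod 2) → ZMod 2} (hf : f ∈ RMs σ d) (hg : g ∈ RMs σ e) :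
    f * g ∈ RMs σ (d + e) := by
  induction hf using Submodule.span_induction with
  | mem f h =>
    obtain ⟨I, hI, rfl⟩ := h
    induction hg using Submodule.span_induction with
    | mem g h =>
      obtain ⟨J, hJ, rfl⟩ := h
      rw [monoI_mul]
      exact monoI_mem ((card_union_le _ _).trans (add_le_add hI hJ))
    | zero => simp
    | add x y _ _ hx hy => rw [mul_add]; exact Submodule.add_mem _ hx hy
    | smul a x _ hx => rw [mul_smul_comm]; exact Submodule.smul_mem _ _ hx
  | zero => simp
  | add x y _ _ hx hy => rw [add_mul]; exact Submodule.add_mem _ hx hy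
  | smul a x _ hx => rw [smul_mul_assoc]; exact Submodule.smul_mem _ _ hx

lemma one_mem_RMs (d : ℕ) : (fun _ => 1) ∈ RMs σ d := by
  have := monoI_mem (σ := σ) (I := ∅) (d := d) (by simp)
  convert this using 1
  funext v; simp [monoI]

lemma const_mem_RMs (d : ℕ) (a : ZMod 2) : (fun _ => a) ∈ RMs σ d := by
  have := Submodule.smul_mem _ a (one_mem_RMs (σ := σ) d)
  convert this using 1
  funext v; simp

lemma coord_mem_RMs (i : σ) : (fun v => v i) ∈ RMs σ 1 := by
  have := monoI_mem (σ := σ) (I := {i}) (d := 1) (by simp)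
  convert this using 1
  funext v; simp [monoI]

lemma prod_mem_RMs (I : Finset τ) {g : τ → (σ → ZMod 2) → ZMod 2} (hg : ∀ i, g i ∈ RMs σ 1) :
    (fun v => ∏ i ∈ I, g i v) ∈ RMs σ #I := by
  induction I using Finset.induction_on with
  | empty => simpa using one_mem_RMs (σ := σ) 0
  | insert i I hi ih =>
    rw [card_insert_of_notMem hi, add_comm]
    have := RMs_mul (hg i) ih
    convert this using 1
    funext v; simp [prod_insert hi]

/-- Reed-Muller codes are preserved by affine substitutions. -/
lemma RMs_comp {d : ℕ} {g : (σ → ZMod 2) → (τ → ZMod 2)} (hg : ∀ i, (fun v => g v i) ∈ RMs σ 1)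
    {f : (τ → ZMod 2) → ZMod 2} (hf : f ∈ RMs τ d) : f ∘ g ∈ RMs σ d := by
  induction hf using Submodule.span_induction with
  | mem f h =>
    obtain ⟨I, hI, rfl⟩ := h
    exact RMs_mono hI (prod_mem_RMs I hg)
  | zero => exact Submodule.zero_mem _
  | add x y _ _ hx hy => exact Submodule.add_mem _ hx hy
  | smul a x _ hx => exact Submodule.smul_mem _ a hx

lemma RMs_top : RMs σ (Fintype.card σ) = ⊤ := by
  rw [eq_top_iff]
  intro f _
  have hd : ∀ a : σ → ZMod 2, (fun v => ∏ i, (v i + a i + 1)) ∈ RMs σ (Fintype.card σ) := by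
    intro a
    refine prod_mem_RMs univ (g := fun i v => v i + a i + 1) fun i => ?_
    exact Submodule.add_mem _ (Submodule.add_mem _ (coord_mem_RMs i) (const_mem_RMs 1 (a i)))
      (one_mem_RMs 1)
  have e : f = ∑ a : σ → ZMod 2, f a • fun v => ∏ i, (v i + a i + 1) := by
    funext v
    rw [Finset.sum_apply, sum_eq_single v]
    · have : ∀ b : ZMod 2, b + b + 1 = 1 := by decide
      simp [this]
    · intro a _ ha
      obtain ⟨i, hi⟩ := Function.ne_iff.1 ha
      have : ∀ b c : ZMod 2, b ≠ c → c + b + 1 = 0 := by decide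
      rw [Pi.smul_apply, prod_eq_zero (mem_univ i) (this _ _ hi), smul_zero]
    · simp
  rw [e]
  exact Submodule.sum_mem _ fun a _ => Submodule.smul_mem _ _ (hd a)

lemma monoI_linearIndependent : LinearIndependent (ZMod 2) (monoI (σ := σ)) := by
  refine linearIndependent_of_top_le_span_of_card_eq_finrank ?_ ?_
  · rw [← RMs_top, RMs]
    exact Submodule.span_mono (Set.image_subset_range _ _)
  · rw [Module.finrank_fintype_fun_eq_card]
    simp [ZMod.card]

lemma finrank_RMs (d : ℕ) :
    Module.finrank (ZMod 2) (RMs σ d) = #{I : Finset σ | #I ≤ d} := by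
  have h : RMs σ d = Submodule.span (ZMod 2)
      (Set.range (monoI ∘ (Subtype.val : {I : Finset σ // #I ≤ d} → Finset σ))) := by
    rw [RMs]; congr 1; ext f; simp
  rw [h, finrank_span_eq_card (monoI_linearIndependent.comp _ Subtype.val_injective),
    Fintype.card_subtype]

lemma card_subsets (d : ℕ) :
    #{I : Finset σ | #I ≤ d} = ∑ i ∈ range (d + 1), (Fintype.card σ).choose i := by
  rw [card_eq_sum_card_fiberwise (t := range (d + 1)) (f := fun I => #I)]
  · refine sum_congr rfl fun i hi => ?_
    rw [← card_univ, ← card_powersetCard]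
    congr 1
    ext I
    simp only [mem_filter, mem_univ, true_and, mem_powersetCard, subset_univ]
    rw [mem_range] at hi
    omega
  · intro I hI
    simp at hI ⊢
    omega

end RM

lemma ReedMuller_eq (m d : ℕ) : ReedMuller m d = RMs (Fin m) d := by
  apply le_antisymm
  · rw [ReedMuller, MvPolynomial.restrictTotalDegree, MvPolynomial.restrictSupport_eq_span,
      Submodule.map_span_le]
    rintro _ ⟨s, hs, rfl⟩
    have : (LinearMap.pi fun v : Fin m → ZMod 2 => (MvPolynomial.aeval v).toLinearMap)
        (MvPolynomial.monomial s (1 : ZMod 2)) = monoI s.support := by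
      funext v
      simp only [LinearMap.pi_apply, AlgHom.toLinearMap_apply, MvPolynomial.aeval_monomial, map_one,
        one_mul, monoI, Finsupp.prod]
      exact prod_congr rfl fun i hi => zmod2_pow _ (Finsupp.mem_support_iff.1 hi)
    rw [this]
    refine monoI_mem (le_trans ?_ hs)
    rw [card_eq_sum_ones]
    exact sum_le_sum fun i hi => Nat.one_le_iff_ne_zero.2 (Finsupp.mem_support_iff.1 hi)
  · rw [RMs, Submodule.span_le]
    rintro _ ⟨I, hI, rfl⟩
    refine ⟨∏ i ∈ I, MvPolynomial.X i, ?_, ?_⟩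
    · rw [SetLike.mem_coe, MvPolynomial.mem_restrictTotalDegree]
      refine (MvPolynomial.totalDegree_finsetProd _ _).trans ?_
      simpa using hI
    · funext v
      simp [monoI]

/-! ### The erasure function of Reed-Muller codes and its recursion in `m` -/

/-- The probability that, when all bits are erased independently with probability `t`, the bit at
the origin of `RM(m, d)` cannot be recovered from the other unerased bits. -/
noncomputable def hh (m d : ℕ) (t : ℝ) : ℝ := ex t (covI (RMs (Fin m) d) 0)

lemma ex_perm {ι : Type} [Fintype ι] [DecidableEq ι] (π : Equiv.Perm ι) (t : ℝ)
    (F : (ι → Bool) → ℝ) : ex t (fun x => F (x ∘ π)) = ex t F := by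
  refine Fintype.sum_equiv (Equiv.arrowCongr π.symm (Equiv.refl Bool)) _ _ fun x => ?_
  have : (Equiv.arrowCongr π.symm (Equiv.refl Bool)) x = x ∘ π := by funext i; simp
  rw [this]
  congr 1
  exact (Equiv.prod_comp π fun i => bw t (x i)).symm

lemma covI_congr {ι κ : Type} {C : Submodule (ZMod 2) (ι → ZMod 2)}
    {C' : Submodule (ZMod 2) (κ → ZMod 2)} {i : ι} {j : κ} {x : ι → Bool} {y : κ → Bool}
    (h : Cov C i x ↔ Cov C' j y) : covI C i x = covI C' j y := by
  simp only [covI]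
  split_ifs <;> simp_all

lemma covI_translate (m d : ℕ) (v : Fin m → ZMod 2) (t : ℝ) :
    ex t (covI (RMs (Fin m) d) v) = hh m d t := by
  rw [hh, ← ex_perm (Equiv.addRight v) t (covI (RMs (Fin m) d) 0)]
  congr 1
  funext x
  have hv : ∀ w : Fin m → ZMod 2, w + v + v = w := by
    intro w; funext i
    have : ∀ a b : ZMod 2, a + b + b = a := by decide
    exact this _ _
  have hc : ∀ c ∈ RMs (Fin m) d, (fun w => c (w + v)) ∈ RMs (Fin m) d := by
    intro c hc
    exact RMs_comp (g := fun w => w + v)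
      (fun i => Submodule.add_mem _ (coord_mem_RMs i) (const_mem_RMs 1 (v i))) hc
  refine covI_congr ⟨?_, ?_⟩
  · rintro ⟨c, h, h1, h2⟩
    refine ⟨_, hc c h, by simpa using h1, fun j hj hx => h2 _ ?_ hx⟩
    intro e
    exact hj (by simpa using e)
  · rintro ⟨c, h, h1, h2⟩
    refine ⟨_, hc c h, by rwa [show v + v = 0 by simpa using hv 0], fun j hj hx => h2 _ ?_ ?_⟩
    · intro e
      apply hj
      have := hv j
      rw [e, zero_add] at this
      exact this.symm
    · simpa [hv] using hx

lemma hh_area (m d : ℕ) :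
    ∫ t in (0:ℝ)..1, hh m d t = Module.finrank (ZMod 2) (RMs (Fin m) d) / 2 ^ m := by
  have := area (RMs (Fin m) d)
  simp only [covI_translate, sum_const, card_univ, nsmul_eq_mul] at this
  rw [← this]
  simp [ZMod.card]

lemma log_ZC_RM (m d : ℕ) {θ : ℝ} (h0 : 0 ≤ θ) (h1 : θ ≤ 1) :
    Real.log (ZC (RMs (Fin m) d) fun _ => θ) ≤
      Real.log 2 * (2 ^ m * hh m d (Real.logb 2 (1 + θ))) := by
  have := log_ZC_le_cov (RMs (Fin m) d) h0 h1
  simpa [covI_translate, ZMod.card] using this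

lemma hh_nonneg (m d : ℕ) {t : ℝ} (h0 : 0 ≤ t) (h1 : t ≤ 1) : 0 ≤ hh m d t :=
  ex_nonneg h0 h1 (covI_nonneg _ _)

lemma hh_le_one (m d : ℕ) {t : ℝ} (h0 : 0 ≤ t) (h1 : t ≤ 1) : hh m d t ≤ 1 := by
  have := ex_mono h0 h1 (covI_le_one (RMs (Fin m) d) 0)
  rwa [ex_const] at this

lemma hh_mono (m d : ℕ) : MonotoneOn (hh m d) (Set.Icc 0 1) := covI_mono _ _

lemma hh_continuous (m d : ℕ) : Continuous (hh m d) := ex_continuous _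

lemma covI_sq {ι : Type} (C : Submodule (ZMod 2) (ι → ZMod 2)) (i : ι) (x : ι → Bool) :
    covI C i x ^ 2 = covI C i x := by
  rw [covI]; split_ifs <;> norm_num

lemma covI_update {ι : Type} [DecidableEq ι] (C : Submodule (ZMod 2) (ι → ZMod 2)) (i : ι)
    (x : ι → Bool) (b : Bool) : covI C i (Function.update x i b) = covI C i x := by
  have : Cov C i (Function.update x i b) ↔ Cov C i x := by
    refine exists_congr fun c => and_congr_right fun _ => and_congr_right fun _ => ?_
    refine forall_congr' fun j => forall_congr' fun hj => ?_
    rw [Function.update_of_ne hj]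
  exact covI_congr this

lemma fc_covI_eq_zero {ι : Type} [Fintype ι] [DecidableEq ι]
    (C : Submodule (ZMod 2) (ι → ZMod 2)) (t : ℝ) {i : ι} {T : Finset ι} (hi : i ∈ T) :
    fc t (covI C i) T = 0 := by
  rw [fc, ex_resample t i]
  have h : ∀ (x : ι → Bool) (b : Bool), chi t T (Function.update x i b) =
      phi t b * chi t (T.erase i) x := by
    intro x b
    have := chi_update (t := t) (notMem_erase i T) x b
    rw [← this, chi, chi, ← mul_prod_erase T _ hi, Function.update_self]
  simp only [h, covI_update]
  have : ∀ x : ι → Bool, t * (covI C i x * (phi t true * chi t (T.erase i) x)) +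
      (1 - t) * (covI C i x * (phi t false * chi t (T.erase i) x)) = 0 := by
    intro x
    have := phi_mean t
    linear_combination (covI C i x * chi t (T.erase i) x) * this
  simp only [this]
  exact ex_const t 0

/-- The embedding of `F₂^m` into `F₂^(m+1)` as the graph of the linear functional `a`. -/
def graphEmb {m : ℕ} (a : Module.Dual (ZMod 2) (Fin m → ZMod 2)) (v : Fin m → ZMod 2) :
    Fin (m + 1) → ZMod 2 := Fin.cons (a v) v

lemma graphEmb_inj {m : ℕ} (a b : Module.Dual (ZMod 2) (Fin m → ZMod 2)) (u v : Fin m → ZMod 2)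
    (h : graphEmb a u = graphEmb b v) : u = v := (Fin.cons_inj.1 h).2

lemma dual_mem_RMs {m : ℕ} (a : Module.Dual (ZMod 2) (Fin m → ZMod 2)) :
    (fun v => a v) ∈ RMs (Fin m) 1 := by
  have : (fun v => a v) = ∑ i, a (fun j => if i = j then 1 else 0) • fun v : Fin m → ZMod 2 => v i := by
    funext v
    rw [LinearMap.pi_apply_eq_sum_univ a v, Finset.sum_apply]
    exact sum_congr rfl fun i _ => by simp [mul_comm]
  rw [this]
  exact Submodule.sum_mem _ fun i _ => Submodule.smul_mem _ _ (coord_mem_RMs i)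

lemma covI_graphEmb {m d : ℕ} (a : Module.Dual (ZMod 2) (Fin m → ZMod 2))
    (X : (Fin (m + 1) → ZMod 2) → Bool) :
    covI (RMs (Fin (m + 1)) d) 0 X ≤ covI (RMs (Fin m) d) 0 (X ∘ graphEmb a) := by
  have g0 : graphEmb a 0 = 0 := by
    funext i; refine Fin.cases ?_ (fun i => ?_) i <;> simp [graphEmb]
  have : Cov (RMs (Fin (m + 1)) d) 0 X → Cov (RMs (Fin m) d) 0 (X ∘ graphEmb a) := by
    rintro ⟨c, hc, h1, h2⟩
    refine ⟨c ∘ graphEmb a, RMs_comp (fun i => ?_) hc, by simp [g0, h1], fun j hj hx => ?_⟩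
    · refine Fin.cases ?_ (fun i => ?_) i
      · exact dual_mem_RMs a
      · exact coord_mem_RMs i
    · refine h2 _ (fun e => hj ?_) hx
      rw [← g0] at e
      exact graphEmb_inj a a _ _ e
  simp only [covI]
  split_ifs <;> norm_num
  tauto

open scoped Classical in
/-- A set `T` of nonzero vectors is annihilated by at most a fraction `1 / (|T| + 1)` of the linear
functionals. -/
lemma card_annihilator {m : ℕ} [Fintype (Module.Dual (ZMod 2) (Fin m → ZMod 2))]
    (T : Finset (Fin m → ZMod 2)) (h0 : (0 : Fin m → ZMod 2) ∉ T) :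
    #{a : Module.Dual (ZMod 2) (Fin m → ZMod 2) | ∀ v ∈ T, a v = 0} * (#T + 1) ≤ 2 ^ m := by
  set W := Submodule.span (ZMod 2) (T : Set (Fin m → ZMod 2)) with hW
  have h1 : #{a : Module.Dual (ZMod 2) (Fin m → ZMod 2) | ∀ v ∈ T, a v = 0} =
      Fintype.card W.dualAnnihilator := by
    rw [Fintype.card_subtype]
    congr 1
    ext a
    simp only [mem_filter, mem_univ, true_and, Submodule.mem_dualAnnihilator]
    constructor
    · intro h w hw
      induction hw using Submodule.span_induction with
      | mem x hx => exact h x hx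
      | zero => simp
      | add x y _ _ hx hy => simp [hx, hy]
      | smul c x _ hx => simp [hx]
    · exact fun h v hv => h v (Submodule.subset_span hv)
  have h2 : #T + 1 ≤ Fintype.card W := by
    rw [← card_insert_of_notMem h0, Fintype.card_subtype]
    refine card_le_card fun v hv => ?_
    rw [mem_insert] at hv
    simp only [mem_filter, mem_univ, true_and]
    rcases hv with rfl | hv
    · exact Submodule.zero_mem _
    · exact Submodule.subset_span hv
  have h3 := Subspace.finrank_add_finrank_dualAnnihilator_eq W
  rw [h1]
  refine (Nat.mul_le_mul_left _ h2).trans ?_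
  rw [Module.card_eq_pow_finrank (K := ZMod 2) (V := W),
    Module.card_eq_pow_finrank (K := ZMod 2) (V := W.dualAnnihilator), ZMod.card, ← pow_add,
    add_comm, h3]
  simp

/-- Comparing `RM(m+1, d)` with its restrictions to two graphs of linear functionals, averaged over
the pair of graphs. -/
lemma hh_succ_le (m d : ℕ) {t : ℝ} (h0 : 0 < t) (h1 : t < 1) :
    hh (m + 1) d t ≤ ∑ T, fc t (covI (RMs (Fin m) d) 0) T ^ 2 / (#T + 1) := by
  classical
  set f := covI (RMs (Fin m) d) 0 with hf
  have : Finite (Module.Dual (ZMod 2) (Fin m → ZMod 2)) := Module.finite_of_finite (ZMod 2)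
  have : Fintype (Module.Dual (ZMod 2) (Fin m → ZMod 2)) := Fintype.ofFinite _
  have hcard : Fintype.card (Module.Dual (ZMod 2) (Fin m → ZMod 2)) = 2 ^ m := by
    rw [Module.card_eq_pow_finrank (K := ZMod 2), ZMod.card, Subspace.dual_finrank_eq]
    simp
  have one : ∀ a : Module.Dual (ZMod 2) (Fin m → ZMod 2), hh (m + 1) d t ≤
      ∑ T : Finset (Fin m → ZMod 2), if ∀ v ∈ T, a v = 0 then fc t f T ^ 2 else 0 := by
    intro a
    have e := ex_two_copies h0 h1 f (graphEmb 0) (graphEmb a) (fun u v => graphEmb_inj _ _ u v)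
      (fun u v => graphEmb_inj _ _ u v) (fun u v => graphEmb_inj _ _ u v)
    have e2 : ∀ v : Fin m → ZMod 2, graphEmb 0 v = graphEmb a v ↔ a v = 0 := by
      intro v
      simp only [graphEmb, Fin.cons_inj, LinearMap.zero_apply, and_true]
      exact eq_comm
    simp only [e2] at e
    rw [← e]
    refine ex_mono h0.le h1.le fun X => ?_
    have a1 := covI_graphEmb (d := d) 0 X
    have a2 := covI_graphEmb (d := d) a X
    have a3 := covI_sq (RMs (Fin (m + 1)) d) 0 X
    have a4 := covI_nonneg (RMs (Fin (m + 1)) d) 0 X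
    rw [← a3, sq]
    exact mul_le_mul a1 a2 a4 (a4.trans a1)
  have sum := sum_le_sum fun a (_ : a ∈ (univ : Finset (Module.Dual (ZMod 2) (Fin m → ZMod 2)))) => one a
  rw [sum_const, card_univ, hcard, nsmul_eq_mul, sum_comm] at sum
  have bound : ∀ T : Finset (Fin m → ZMod 2),
      (∑ a : Module.Dual (ZMod 2) (Fin m → ZMod 2), if ∀ v ∈ T, a v = 0 then fc t f T ^ 2 else 0) ≤
        2 ^ m * (fc t f T ^ 2 / (#T + 1)) := by
    intro T
    by_cases hT : (0 : Fin m → ZMod 2) ∈ T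
    · rw [hf, fc_covI_eq_zero _ _ hT]; simp
    · have := card_annihilator T hT
      rw [← sum_filter, sum_const, nsmul_eq_mul, mul_div_assoc', le_div_iff₀ (by positivity)]
      have : (#{a : Module.Dual (ZMod 2) (Fin m → ZMod 2) | ∀ v ∈ T, a v = 0} : ℝ) * (#T + 1) ≤
          2 ^ m := by exact_mod_cast this
      nlinarith [sq_nonneg (fc t f T)]
  have fin := sum.trans (sum_le_sum fun T _ => bound T)
  rw [← mul_sum] at fin
  push_cast at fin
  exact le_of_mul_le_mul_left fin (by positivity)

lemma hh_parseval (m d : ℕ) {t : ℝ} (h0 : 0 < t) (h1 : t < 1) :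
    ∑ T, fc t (covI (RMs (Fin m) d) 0) T ^ 2 = hh m d t := by
  rw [← parseval h0 h1, hh]
  simp only [covI_sq]

lemma hh_succ_le_half (m d : ℕ) {t : ℝ} (h0 : 0 < t) (h1 : t < 1) :
    hh (m + 1) d t ≤ (hh m d t + hh m d t ^ 2) / 2 := by
  refine (hh_succ_le m d h0 h1).trans ?_
  have p := hh_parseval m d h0 h1
  have e := fc_empty (t := t) (covI (RMs (Fin m) d) 0)
  rw [← add_sum_erase _ _ (mem_univ ∅), e] at p ⊢
  have : ∑ T ∈ univ.erase ∅, fc t (covI (RMs (Fin m) d) 0) T ^ 2 / ((#T : ℝ) + 1) ≤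
      ∑ T ∈ univ.erase ∅, fc t (covI (RMs (Fin m) d) 0) T ^ 2 / 2 := by
    refine sum_le_sum fun T hT => ?_
    have hT : 1 ≤ #T := by
      rw [Nat.one_le_iff_ne_zero, Ne, card_eq_zero]; exact ne_of_mem_erase hT
    have : (1:ℝ) ≤ #T := by exact_mod_cast hT
    gcongr; linarith
  rw [← sum_div] at this
  rw [show ex t (covI (RMs (Fin m) d) 0) = hh m d t from rfl] at *
  simp only [card_empty, Nat.cast_zero, zero_add, div_one]
  linarith

lemma hh_succ_le_level (m d D : ℕ) {t : ℝ} (h0 : 0 < t) (h1 : t < 1) :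
    hh (m + 1) d t ≤ (4 + 3 * kap t) ^ D * (hh m d t * √(hh m d t)) + hh m d t / (D + 2) := by
  refine (hh_succ_le m d h0 h1).trans ?_
  have hn := hh_nonneg m d h0.le h1.le
  have p := hh_parseval m d h0 h1
  have l := level_ineq h0 h1 (covI (RMs (Fin m) d) 0) (covI_sq _ _) D
  rw [show ex t (covI (RMs (Fin m) d) 0) = hh m d t from rfl] at l
  have hk := kap_nonneg h0 h1
  have l2 : (∑ T : Finset (Fin m → ZMod 2),
      if #T ≤ D then fc t (covI (RMs (Fin m) d) 0) T ^ 2 else 0) ≤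
        (4 + 3 * kap t) ^ D * (hh m d t * √(hh m d t)) := by
    refine le_of_sq_le_sq ?_ (by positivity)
    refine l.trans (le_of_eq ?_)
    rw [mul_pow, mul_pow, Real.sq_sqrt hn]; ring
  have split : ∀ T : Finset (Fin m → ZMod 2),
      fc t (covI (RMs (Fin m) d) 0) T ^ 2 / ((#T : ℝ) + 1) ≤
      (if #T ≤ D then fc t (covI (RMs (Fin m) d) 0) T ^ 2 else 0) +
        fc t (covI (RMs (Fin m) d) 0) T ^ 2 / (D + 2) := by
    intro T
    have q := sq_nonneg (fc t (covI (RMs (Fin m) d) 0) T)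
    split_ifs with h
    · have := div_le_self q (show (1:ℝ) ≤ #T + 1 by simp)
      have : 0 ≤ fc t (covI (RMs (Fin m) d) 0) T ^ 2 / ((D:ℝ) + 2) := by positivity
      linarith
    · rw [zero_add]
      have : ((D:ℝ) + 1) ≤ #T := by exact_mod_cast Nat.succ_le_of_lt (not_le.1 h)
      exact div_le_div_of_nonneg_left q (by positivity) (by linarith)
  refine (sum_le_sum fun T _ => split T).trans ?_
  rw [sum_add_distrib, ← sum_div, p]
  linarith

/-! ### Rates of Reed-Muller codes -/

/-- The rate `2^{-m} ∑_{i ≤ d} C(m, i)` of `RM(m, d)`. -/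
noncomputable def rr (m d : ℕ) : ℝ := (∑ i ∈ range (d + 1), (m.choose i : ℝ)) / 2 ^ m

lemma finrank_RM (m d : ℕ) :
    (Module.finrank (ZMod 2) (RMs (Fin m) d) : ℝ) / 2 ^ m = rr m d := by
  rw [finrank_RMs, card_subsets, Fintype.card_fin, rr]
  push_cast
  rfl

lemma rr_diff (m d : ℕ) : rr m d - rr (m + 1) d = (m.choose d : ℝ) / 2 ^ (m + 1) := by
  have key : ∑ i ∈ range (d + 1), ((m + 1).choose i : ℝ) + m.choose d =
      2 * ∑ i ∈ range (d + 1), (m.choose i : ℝ) := by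
    induction d with
    | zero => norm_num
    | succ d ih =>
      rw [sum_range_succ, sum_range_succ (fun i => (m.choose i : ℝ)), Nat.choose_succ_succ]
      push_cast
      linarith
  rw [rr, rr, pow_succ]
  field_simp
  linarith

lemma centralBinom_sq_le (n : ℕ) : n.centralBinom ^ 2 * (2 * n + 1) ≤ 16 ^ n := by
  induction n with
  | zero => simp
  | succ n ih =>
    have h := Nat.succ_mul_centralBinom_succ n
    have : (n + 1) ^ 2 * ((n + 1).centralBinom ^ 2 * (2 * (n + 1) + 1)) ≤
        (n + 1) ^ 2 * 16 ^ (n + 1) := by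
      calc (n + 1) ^ 2 * ((n + 1).centralBinom ^ 2 * (2 * (n + 1) + 1))
          = ((n + 1) * (n + 1).centralBinom) ^ 2 * (2 * n + 3) := by ring
        _ = (n.centralBinom ^ 2 * (2 * n + 1)) * (4 * ((2 * n + 1) * (2 * n + 3))) := by
          rw [h]; ring
        _ ≤ 16 ^ n * (4 * (4 * (n + 1) ^ 2)) := by
          refine Nat.mul_le_mul ih (Nat.mul_le_mul_left 4 ?_)
          nlinarith
        _ = (n + 1) ^ 2 * 16 ^ (n + 1) := by ring
    exact Nat.le_of_mul_le_mul_left this (by positivity)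

lemma choose_sq_le (m d : ℕ) : m.choose d ^ 2 * (m + 1) ≤ 4 ^ m := by
  refine le_trans (Nat.mul_le_mul_right _ (Nat.pow_le_pow_left (Nat.choose_le_middle d m) 2)) ?_
  rcases Nat.even_or_odd' m with ⟨n, rfl | rfl⟩
  · have := centralBinom_sq_le n
    rw [Nat.centralBinom] at this
    rw [pow_mul, Nat.mul_div_cancel_left n two_pos]
    simpa using this
  · have h := centralBinom_sq_le (n + 1)
    have e : (n + 1).centralBinom = 2 * (2 * n + 1).choose n := by
      rw [Nat.centralBinom, show 2 * (n + 1) = (2 * n + 1) + 1 by ring, Nat.choose_succ_succ,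
        Nat.succ_eq_add_one, Nat.choose_symm_half]
      ring
    rw [show (2 * n + 1) / 2 = n by omega]
    rw [e] at h
    have e2 : 4 ^ (2 * n + 1) * 4 = 16 ^ (n + 1) := by
      rw [show (16:ℕ) = 4 ^ 2 by norm_num, ← pow_mul]; ring
    nlinarith [sq_nonneg ((2 * n + 1).choose n)]

lemma choose_le (m d : ℕ) : (m.choose d : ℝ) / 2 ^ m ≤ 1 / √(m + 1) := by
  have h : (m.choose d : ℝ) ^ 2 * (m + 1) ≤ 4 ^ m := by exact_mod_cast choose_sq_le m d
  have e : (4:ℝ) ^ m = (2 ^ m) ^ 2 := by rw [← pow_mul, mul_comm, pow_mul]; norm_num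
  rw [div_le_div_iff₀ (by positivity) (by positivity), one_mul]
  refine le_of_sq_le_sq ?_ (by positivity)
  rw [mul_pow, Real.sq_sqrt (by positivity), ← e]
  exact h

lemma rr_sub_le (m d : ℕ) : rr m d - rr (m + 1) d ≤ 1 / √(m + 1) / 2 := by
  rw [rr_diff, pow_succ, ← div_div]
  have := choose_le m d
  linarith

lemma rr_le_add (m d j : ℕ) : rr m d ≤ rr (m + j) d + j * (1 / √(m + 1) / 2) := by
  induction j with
  | zero => simp
  | succ j ih =>
    have h := rr_sub_le (m + j) d
    have : 1 / √(((m + j : ℕ) : ℝ) + 1) ≤ 1 / √((m:ℝ) + 1) := by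
      push_cast
      gcongr
      linarith [Nat.cast_nonneg (α := ℝ) j]
    rw [← add_assoc]
    push_cast
    linarith

/-! ### Sharp threshold and amplification -/

/-- If the bit at the origin is unrecoverable with probability above `1/2` at `t = l`, the area under `hh` forces the
rate to be essentially at least `1 - l`. -/
lemma threshold (m d : ℕ) {l : ℝ} (l0 : 0 < l) (l1 : l < 1) (h : 1 / 2 < hh m d l) :
    1 - l - 2 / √(m + 1) ≤ rr m d := by
  have c1 := hh_continuous m d
  have c2 := hh_continuous (m + 1) d
  have i1 : ∀ a b, IntervalIntegrable (hh m d) MeasureTheory.volume a b :=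
    fun a b => c1.intervalIntegrable a b
  have a1 := hh_area m d
  have a2 := hh_area (m + 1) d
  rw [finrank_RM] at a1 a2
  have iq : ∀ a b, IntervalIntegrable (fun t => hh m d t - hh m d t ^ 2) MeasureTheory.volume a b :=
    fun a b => (c1.sub (c1.pow 2)).intervalIntegrable a b
  have id : IntervalIntegrable (fun t => 2 * (hh m d t - hh (m + 1) d t)) MeasureTheory.volume 0 1 :=
    (continuous_const.mul (c1.sub c2)).intervalIntegrable _ _
  have b1 : ∫ t in (0:ℝ)..1, (hh m d t - hh m d t ^ 2) ≤
      ∫ t in (0:ℝ)..1, 2 * (hh m d t - hh (m + 1) d t) := by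
    refine intervalIntegral.integral_mono_on_of_le_Ioo zero_le_one (iq 0 1) id fun t ht => ?_
    have := hh_succ_le_half m d ht.1 ht.2
    linarith
  rw [intervalIntegral.integral_const_mul, intervalIntegral.integral_sub (i1 0 1)
    (c2.intervalIntegrable _ _), a1, a2, rr_diff] at b1
  have b2 : ∫ t in l..1, (hh m d t - hh m d t ^ 2) ≤
      ∫ t in (0:ℝ)..1, (hh m d t - hh m d t ^ 2) := by
    rw [← intervalIntegral.integral_add_adjacent_intervals (iq 0 l) (iq l 1)]
    have : 0 ≤ ∫ t in (0:ℝ)..l, (hh m d t - hh m d t ^ 2) := by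
      refine intervalIntegral.integral_nonneg l0.le fun t ht => ?_
      have h1 := hh_nonneg m d ht.1 (ht.2.trans l1.le)
      have h2 := hh_le_one m d ht.1 (ht.2.trans l1.le)
      nlinarith
    linarith
  have b3 : ∫ t in l..1, (1 - hh m d t) ≤ ∫ t in l..1, 2 * (hh m d t - hh m d t ^ 2) := by
    refine intervalIntegral.integral_mono_on l1.le
      ((continuous_const.sub c1).intervalIntegrable _ _)
      ((continuous_const.mul (c1.sub (c1.pow 2))).intervalIntegrable _ _) fun t ht => ?_
    have h2 := hh_le_one m d (l0.le.trans ht.1) ht.2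
    have h3 := hh_mono m d ⟨l0.le, l1.le⟩ ⟨l0.le.trans ht.1, ht.2⟩ ht.1
    nlinarith
  rw [intervalIntegral.integral_const_mul, intervalIntegral.integral_sub
    (continuous_const.intervalIntegrable _ _) (i1 l 1)] at b3
  have b4 : ∫ t in l..1, hh m d t ≤ ∫ t in (0:ℝ)..1, hh m d t := by
    rw [← intervalIntegral.integral_add_adjacent_intervals (i1 0 l) (i1 l 1)]
    have : 0 ≤ ∫ t in (0:ℝ)..l, hh m d t :=
      intervalIntegral.integral_nonneg l0.le fun t ht => hh_nonneg m d ht.1 (ht.2.trans l1.le)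
    linarith
  have b5 := choose_le m d
  rw [pow_succ, ← div_div] at b1
  simp only [intervalIntegral.integral_const, smul_eq_mul, mul_one] at b3
  rw [a1] at b4
  have : 2 / √((m:ℝ) + 1) = 2 * (1 / √((m:ℝ) + 1)) := by ring
  linarith

/-- Below the threshold, `K` steps of the recursion contract `hh` geometrically, and `K` further
steps contract it by `2 / (D + 2)` each. -/
lemma amplify (m d K D : ℕ) {l : ℝ} (l0 : 0 < l) (l1 : l < 1)
    (hr : rr m d < 1 - l - 2 / √(m + 1))
    (hD : (4 + 3 * kap l) ^ D * √((3 / 4) ^ K) ≤ 1 / (D + 2)) :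
    hh (m + 2 * K) d l ≤ (2 / (D + 2)) ^ K := by
  have start : hh m d l ≤ 1 / 2 := by
    by_contra hc
    exact absurd (threshold m d l0 l1 (not_le.1 hc)) (not_le.2 hr)
  have s1 : ∀ j, hh (m + j) d l ≤ 1 / 2 * (3 / 4) ^ j := by
    intro j
    induction j with
    | zero => simpa using start
    | succ j ih =>
      have a := hh_succ_le_half (m + j) d l0 l1
      have n := hh_nonneg (m + j) d l0.le l1.le
      have : hh (m + j) d l ≤ 1 / 2 := ih.trans (by
        have : (3 / 4 : ℝ) ^ j ≤ 1 := pow_le_one₀ (by norm_num) (by norm_num)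
        linarith)
      rw [← add_assoc, pow_succ]
      nlinarith
  have dpos : (0:ℝ) < D + 2 := by positivity
  have d1 : (2:ℝ) / (D + 2) ≤ 1 := by rw [div_le_one dpos]; linarith [Nat.cast_nonneg (α := ℝ) D]
  have hk := kap_nonneg l0 l1
  have s2 : ∀ j, hh (m + K + j) d l ≤ (3 / 4) ^ K * (2 / (D + 2)) ^ j := by
    intro j
    induction j with
    | zero =>
      have := s1 K
      have p : (0:ℝ) < (3 / 4) ^ K := by positivity
      simp only [add_zero, pow_zero, mul_one]
      linarith
    | succ j ih =>
      have a := hh_succ_le_level (m + K + j) d D l0 l1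
      have n := hh_nonneg (m + K + j) d l0.le l1.le
      have b : hh (m + K + j) d l ≤ (3 / 4) ^ K :=
        ih.trans (mul_le_of_le_one_right (by positivity) (pow_le_one₀ (by positivity) d1))
      have c : (4 + 3 * kap l) ^ D * √(hh (m + K + j) d l) ≤ 1 / (D + 2) :=
        le_trans (by gcongr) hD
      have e : (4 + 3 * kap l) ^ D * (hh (m + K + j) d l * √(hh (m + K + j) d l)) ≤
          hh (m + K + j) d l * (1 / (D + 2)) := by nlinarith
      rw [← add_assoc, pow_succ]
      calc hh (m + K + j + 1) d l ≤ hh (m + K + j) d l * (2 / (D + 2)) := by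
            refine a.trans ((add_le_add_left e _).trans (le_of_eq ?_)); ring
        _ ≤ (3 / 4) ^ K * (2 / (D + 2)) ^ j * (2 / (D + 2)) := by gcongr
        _ = _ := by ring
  have f := s2 K
  rw [show m + 2 * K = m + K + K by ring]
  exact f.trans (mul_le_of_le_one_left (by positivity) (pow_le_one₀ (by norm_num) (by norm_num)))

lemma tendsto_sqrt_nat : Tendsto (fun m : ℕ => √(m:ℝ)) atTop atTop :=
  Real.tendsto_sqrt_atTop.comp tendsto_natCast_atTop_atTop

lemma tendsto_natSqrt : Tendsto Nat.sqrt atTop atTop := by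
  refine tendsto_atTop_atTop.2 fun b => ⟨b * b, fun a h => ?_⟩
  exact Nat.le_sqrt.2 h

lemma level_eventually (B : ℝ) (hB : 0 < B) :
    ∀ᶠ K : ℕ in atTop, B ^ Nat.sqrt K * √((3 / 4) ^ K) ≤ 1 / ((Nat.sqrt K : ℝ) + 2) := by
  set q : ℝ := √(3 / 4) with hq
  have q2 : q ^ 2 = 3 / 4 := Real.sq_sqrt (by norm_num)
  have q0 : 0 ≤ q := Real.sqrt_nonneg _
  have q1 : q < 1 := by nlinarith
  have t : Tendsto (fun D : ℕ => B * q ^ D) atTop (nhds 0) := by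
    simpa using (tendsto_pow_atTop_nhds_zero_of_lt_one q0 q1).const_mul B
  have e := tendsto_natSqrt.eventually (t.eventually_le_const (show (0:ℝ) < 1 / 4 by norm_num))
  filter_upwards [e, tendsto_natSqrt.eventually_ge_atTop 1] with K h hD
  set D := Nat.sqrt K
  have s1 : √((3 / 4) ^ K) ≤ (q ^ D) ^ D := by
    rw [Real.sqrt_le_left (by positivity), ← q2, ← pow_mul, ← pow_mul, ← pow_mul]
    refine pow_le_pow_of_le_one q0 q1.le ?_
    have : D * D ≤ K := Nat.sqrt_le K
    nlinarith
  have s2 : (D:ℝ) + 2 ≤ 4 ^ D := by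
    have : ∀ n : ℕ, 1 ≤ n → n + 2 ≤ 4 ^ n := by
      intro n hn
      induction n, hn using Nat.le_induction with
      | base => norm_num
      | succ n _ ih => rw [pow_succ]; omega
    exact_mod_cast this D hD
  calc B ^ D * √((3 / 4) ^ K) ≤ B ^ D * (q ^ D) ^ D := by gcongr
    _ = (B * q ^ D) ^ D := by rw [mul_pow]
    _ ≤ (1 / 4) ^ D := by gcongr
    _ = 1 / 4 ^ D := by rw [div_pow, one_pow]
    _ ≤ _ := by gcongr

/-- Below capacity the erasure function is at most `exp (-ε √m log m)`. -/
lemma hh_small {l ρ : ℝ} (l0 : 0 < l) (l1 : l < 1) (hρ : ρ < 1 - l) :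
    ∃ ε > 0, ∀ᶠ m : ℕ in atTop, ∀ d, rr m d ≤ ρ → hh m d l ≤ Real.exp (-(ε * √m * Real.log m)) := by
  set δ := 1 - l - ρ with hδ
  have δ0 : 0 < δ := by linarith
  set c := min (δ / 4) (1 / 4) with hc
  have c0 : 0 < c := lt_min (by linarith) (by norm_num)
  have c1 : c ≤ δ / 4 := min_le_left _ _
  have c2 : c ≤ 1 / 4 := min_le_right _ _
  refine ⟨c / 16, by positivity, ?_⟩
  have hB : 0 < 4 + 3 * kap l := by have := kap_nonneg l0 l1; linarith
  have tK : Tendsto (fun m : ℕ => ⌊c * √(m:ℝ)⌋₊) atTop atTop :=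
    tendsto_nat_floor_atTop.comp (tendsto_sqrt_nat.const_mul_atTop c0)
  filter_upwards [tK.eventually (level_eventually _ hB),
    tendsto_sqrt_nat.eventually_ge_atTop (2 / c), tendsto_sqrt_nat.eventually_gt_atTop (8 / δ),
    tendsto_sqrt_nat.eventually_ge_atTop ((8 / c) ^ 2), tendsto_sqrt_nat.eventually_ge_atTop 1]
    with m hlev h2 h8 h64 h1 d hr
  set s := √(m:ℝ) with hs
  have s0 : 0 < s := by linarith
  have ms : (m:ℝ) = s ^ 2 := (Real.sq_sqrt (Nat.cast_nonneg m)).symm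
  set K := ⌊c * s⌋₊ with hK
  have K1 : (K:ℝ) ≤ c * s := Nat.floor_le (by positivity)
  have K2 : c * s / 2 ≤ K := by
    have := Nat.lt_floor_add_one (c * s)
    rw [div_le_iff₀ c0] at h2
    linarith
  have K3 : 4 * K ≤ m := by
    have : (4 * K : ℝ) ≤ m := by rw [ms]; nlinarith
    exact_mod_cast this
  set m₀ := m - 2 * K with hm₀
  have hm : m₀ + 2 * K = m := by omega
  have m₀' : (m:ℝ) / 2 ≤ m₀ := by
    have : m ≤ 2 * m₀ := by omega
    have : (m:ℝ) ≤ 2 * m₀ := by exact_mod_cast this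
    linarith
  have sq : s / 2 ≤ √((m₀:ℝ) + 1) := by
    refine Real.le_sqrt_of_sq_le ?_
    nlinarith
  have hrate : rr m₀ d < 1 - l - 2 / √(m₀ + 1) := by
    have a := rr_le_add m₀ d (2 * K)
    rw [hm] at a
    have b : ((2 * K : ℕ) : ℝ) * (1 / √((m₀:ℝ) + 1) / 2) ≤ δ / 2 := by
      push_cast
      have : (1:ℝ) / √((m₀:ℝ) + 1) ≤ 1 / (s / 2) := by gcongr
      calc 2 * (K:ℝ) * (1 / √((m₀:ℝ) + 1) / 2) = K * (1 / √((m₀:ℝ) + 1)) := by ring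
        _ ≤ (c * s) * (1 / (s / 2)) := by gcongr
        _ = 2 * c := by field_simp
        _ ≤ _ := by linarith
    have b' : 2 / √((m₀:ℝ) + 1) < δ / 2 := by
      calc 2 / √((m₀:ℝ) + 1) ≤ 2 / (s / 2) := by gcongr
        _ = 4 / s := by field_simp; norm_num
        _ < δ / 2 := by
          rw [div_lt_iff₀ δ0] at h8
          rw [div_lt_iff₀ s0]
          linarith
    linarith
  have main := amplify m₀ d K (Nat.sqrt K) l0 l1 hrate hlev
  rw [hm] at main
  refine main.trans ?_
  set D := Nat.sqrt K
  have Dp : (0:ℝ) < D + 2 := by positivity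
  have D2 : c * s / 2 ≤ ((D:ℝ) + 2) ^ 2 := by
    have : K < (D + 1) * (D + 1) := Nat.lt_succ_sqrt K
    have : (K:ℝ) < (D + 1) * (D + 1) := by exact_mod_cast this
    nlinarith [Nat.cast_nonneg (α := ℝ) D]
  have r8 : 8 / c ≤ √s := Real.le_sqrt_of_sq_le h64
  have D3 : √s ≤ (((D:ℝ) + 2) / 2) ^ 2 := by
    rw [div_le_iff₀ c0] at r8
    have : √s * √s = s := Real.mul_self_sqrt s0.le
    have : 8 * √s ≤ c * s := by nlinarith [Real.sqrt_nonneg s]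
    have e : (((D:ℝ) + 2) / 2) ^ 2 = ((D:ℝ) + 2) ^ 2 / 4 := by ring
    rw [e]; linarith
  have L : Real.log m / 8 ≤ Real.log (((D:ℝ) + 2) / 2) := by
    have a := Real.log_le_log (Real.sqrt_pos.2 s0) D3
    rw [Real.log_sqrt s0.le, Real.log_pow] at a
    rw [ms, Real.log_pow]
    push_cast at a ⊢
    linarith
  have e : (2 / ((D:ℝ) + 2)) ^ K = Real.exp (-(K * Real.log (((D:ℝ) + 2) / 2))) := by
    rw [← mul_neg, ← Real.log_inv, inv_div, Real.exp_nat_mul, Real.exp_log (by positivity)]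
  rw [e, Real.exp_le_exp, neg_le_neg_iff]
  have m1 : (1:ℝ) ≤ m := by rw [ms]; nlinarith
  have lm : 0 ≤ Real.log m := Real.log_nonneg m1
  calc c / 16 * s * Real.log m = c * s / 2 * (Real.log m / 8) := by ring
    _ ≤ K * Real.log (((D:ℝ) + 2) / 2) := by gcongr

/-! ### Counting low-weight codewords -/

section LowWeight
variable {k M : ℕ}

/-- The linear map `u ↦ ∑ᵢ uᵢ Bᵢ`. -/
def LB (B : Fin k → Fin M → ZMod 2) (u : Fin k → ZMod 2) : Fin M → ZMod 2 :=
  fun j => ∑ i, u i * B i j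

/-- The `k`-fold derivative of `f`: the sum of `f` over the `k`-dimensional flat through `(0, v)`
that is the graph of `v + LB B`. -/
def GB (f : (Fin k ⊕ Fin M → ZMod 2) → ZMod 2) (B : Fin k → Fin M → ZMod 2)
    (v : Fin M → ZMod 2) : ZMod 2 :=
  ∑ u : Fin k → ZMod 2, f (Sum.elim u (v + LB B u))

/-- The code `RM(M, d - k)`, understood as zero when `d < k`. -/
def RMk (k M d : ℕ) : Submodule (ZMod 2) ((Fin M → ZMod 2) → ZMod 2) :=
  Submodule.span (ZMod 2) (monoI '' {J : Finset (Fin M) | #J + k ≤ d})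

lemma LB_add (B : Fin k → Fin M → ZMod 2) (u w : Fin k → ZMod 2) :
    LB B (u + w) = LB B u + LB B w := by
  funext j; simp [LB, add_mul, sum_add_distrib]

/-- For `w ≠ 0` and uniformly random `B`, the vector `LB B w` is uniformly distributed. -/
lemma card_LB {w : Fin k → ZMod 2} (hw : w ≠ 0) (P : (Fin M → ZMod 2) → Prop) [DecidablePred P] :
    2 ^ M * #{B : Fin k → Fin M → ZMod 2 | P (LB B w)} =
      Fintype.card (Fin k → Fin M → ZMod 2) * #{y | P y} := by
  obtain ⟨i, hi⟩ := Function.ne_iff.1 hw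
  have hi1 : w i = 1 := (zmod2_ne_zero _).1 hi
  have sh : ∀ (y : Fin M → ZMod 2) (B : Fin k → Fin M → ZMod 2),
      LB (B + Pi.single i y) w = LB B w + y := by
    intro y B
    funext j
    simp only [LB, Pi.add_apply, mul_add, sum_add_distrib]
    congr 1
    rw [sum_eq_single i]
    · simp [hi1]
    · intro b _ hb; simp [Pi.single_eq_of_ne hb]
    · simp
  have h1 : ∀ y : Fin M → ZMod 2, (∑ B : Fin k → Fin M → ZMod 2, if P (LB B w + y) then 1 else 0) =
      ∑ B : Fin k → Fin M → ZMod 2, if P (LB B w) then 1 else 0 := by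
    intro y
    rw [← Equiv.sum_comp (Equiv.addRight (Pi.single i y : Fin k → Fin M → ZMod 2))]
    refine sum_congr rfl fun B _ => ?_
    have yy : y + y = 0 := by
      funext j
      have : ∀ a : ZMod 2, a + a = 0 := by decide
      exact this _
    rw [Equiv.coe_addRight, sh, add_assoc, yy, add_zero]
  have h2 : ∀ B : Fin k → Fin M → ZMod 2, (∑ y, if P (LB B w + y) then 1 else 0) =
      ∑ y, if P y then 1 else 0 := fun B =>
    Equiv.sum_comp (Equiv.addLeft (LB B w)) (fun y => if P y then 1 else 0)
  have h3 := sum_congr rfl fun y (_ : y ∈ (univ : Finset (Fin M → ZMod 2))) => h1 y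
  rw [sum_comm, sum_congr rfl fun B _ => h2 B, sum_const, sum_const, ← card_filter, ← card_filter,
    card_univ, card_univ] at h3
  simpa [ZMod.card] using h3.symm

lemma hammingNorm_split (f : (Fin k ⊕ Fin M → ZMod 2) → ZMod 2) :
    hammingNorm f = ∑ u : Fin k → ZMod 2, #{v : Fin M → ZMod 2 | f (Sum.elim u v) ≠ 0} := by
  simp only [hammingNorm, card_filter]
  rw [← Fintype.sum_prod_type', ← Equiv.sum_comp (Equiv.sumArrowEquivProdArrow _ _ _).symm]
  rfl

lemma GB_fail (f : (Fin k ⊕ Fin M → ZMod 2) → ZMod 2) (hf : 16 * hammingNorm f ≤ 2 ^ M)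
    (u₀ : Fin k → ZMod 2) (v₀ : Fin M → ZMod 2) :
    16 * #{B : Fin k → Fin M → ZMod 2 | GB f B (v₀ + LB B u₀) ≠ f (Sum.elim u₀ v₀)} ≤
      Fintype.card (Fin k → Fin M → ZMod 2) := by
  have z2 : ∀ a : ZMod 2, a + a = 0 := by decide
  have hsub : ({B : Fin k → Fin M → ZMod 2 | GB f B (v₀ + LB B u₀) ≠ f (Sum.elim u₀ v₀)} :
      Finset _) ⊆ (univ.erase u₀).biUnion fun u =>
        {B : Fin k → Fin M → ZMod 2 | f (Sum.elim u (v₀ + LB B (u₀ + u))) ≠ 0} := by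
    intro B hB
    simp only [mem_filter, mem_univ, true_and] at hB
    by_contra hc
    simp only [mem_biUnion, mem_filter, mem_univ, true_and, not_exists, not_and, not_not,
      mem_erase, and_true] at hc
    apply hB
    rw [GB, sum_eq_single u₀]
    · congr 2
      rw [add_assoc, ← LB_add]
      have : u₀ + u₀ = 0 := by funext i; exact z2 _
      rw [this]
      funext j; simp [LB]
    · intro u _ hu
      rw [add_assoc, ← LB_add]
      exact hc u hu
    · simp
  have hcard : ∀ u ∈ univ.erase u₀, 2 ^ M *
      #{B : Fin k → Fin M → ZMod 2 | f (Sum.elim u (v₀ + LB B (u₀ + u))) ≠ 0} =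
      Fintype.card (Fin k → Fin M → ZMod 2) * #{v : Fin M → ZMod 2 | f (Sum.elim u v) ≠ 0} := by
    intro u hu
    have hne : u₀ + u ≠ 0 := by
      intro h
      apply ne_of_mem_erase hu
      funext i
      have : ∀ a b : ZMod 2, a + b = 0 → b = a := by decide
      exact this _ _ (congrFun h i)
    rw [card_LB hne (fun y => f (Sum.elim u (v₀ + y)) ≠ 0)]
    congr 1
    simp only [card_filter]
    exact Equiv.sum_comp (Equiv.addLeft v₀) (fun v => if f (Sum.elim u v) ≠ 0 then 1 else 0)
  have h := (card_le_card hsub).trans card_biUnion_le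
  have h2 : 2 ^ M * #{B : Fin k → Fin M → ZMod 2 | GB f B (v₀ + LB B u₀) ≠ f (Sum.elim u₀ v₀)} ≤
      Fintype.card (Fin k → Fin M → ZMod 2) * hammingNorm f := by
    refine (Nat.mul_le_mul_left _ h).trans ?_
    rw [mul_sum, sum_congr rfl hcard, ← mul_sum, hammingNorm_split]
    exact Nat.mul_le_mul_left _ (sum_le_sum_of_subset (erase_subset _ _))
  have h3 : 2 ^ M * (16 * #{B : Fin k → Fin M → ZMod 2 |
      GB f B (v₀ + LB B u₀) ≠ f (Sum.elim u₀ v₀)}) ≤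
        2 ^ M * Fintype.card (Fin k → Fin M → ZMod 2) := by nlinarith
  exact Nat.le_of_mul_le_mul_left h3 (by positivity)

/-- Summing out `k` variables lowers the degree by `k`. -/
lemma GB_mem {d : ℕ} {f : (Fin k ⊕ Fin M → ZMod 2) → ZMod 2} (hf : f ∈ RMs (Fin k ⊕ Fin M) d)
    (B : Fin k → Fin M → ZMod 2) : GB f B ∈ RMk k M d := by
  set g : (Fin k ⊕ Fin M → ZMod 2) → (Fin k ⊕ Fin M → ZMod 2) :=
    fun p => Sum.elim (p ∘ Sum.inl) (p ∘ Sum.inr + LB B (p ∘ Sum.inl)) with hg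
  have hgm : f ∘ g ∈ RMs (Fin k ⊕ Fin M) d := by
    refine RMs_comp (fun i => ?_) hf
    rcases i with i | j
    · exact coord_mem_RMs (Sum.inl i)
    · refine Submodule.add_mem _ (coord_mem_RMs (Sum.inr j)) ?_
      have : (fun p : Fin k ⊕ Fin M → ZMod 2 => LB B (p ∘ Sum.inl) j) =
          ∑ i, B i j • fun p : Fin k ⊕ Fin M → ZMod 2 => p (Sum.inl i) := by
        funext p
        rw [Finset.sum_apply]
        exact sum_congr rfl fun i _ => by simp [mul_comm]
      rw [this]
      exact Submodule.sum_mem _ fun i _ => Submodule.smul_mem _ _ (coord_mem_RMs _)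
  have e : GB f B = fun v => ∑ u : Fin k → ZMod 2, (f ∘ g) (Sum.elim u v) := by
    funext v; rfl
  rw [e]
  generalize f ∘ g = q at hgm
  induction hgm using Submodule.span_induction with
  | mem q h =>
    obtain ⟨I, hI, rfl⟩ := h
    have hm : ∀ (u : Fin k → ZMod 2) (v : Fin M → ZMod 2), monoI I (Sum.elim u v) =
        (∏ i, if i ∈ I.toLeft then u i else 1) * monoI I.toRight v := by
      intro u v
      rw [prod_ite_mem, univ_inter, monoI, monoI, ← toLeft_disjSum_toRight (u := I),
        prod_disjSum]
      simp
    simp only [hm, ← sum_mul]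
    have hs : ∑ u : Fin k → ZMod 2, (∏ i, if i ∈ I.toLeft then u i else 1) =
        ∏ i : Fin k, ∑ a : ZMod 2, if i ∈ I.toLeft then a else 1 := by
      rw [prod_univ_sum, Fintype.piFinset_univ]
    rw [hs]
    by_cases hall : ∀ i, i ∈ I.toLeft
    · have : ∏ i : Fin k, ∑ a : ZMod 2, (if i ∈ I.toLeft then a else 1) = 1 := by
        refine prod_eq_one fun i _ => ?_
        simp only [hall, if_true]
        decide
      rw [this]
      simp only [one_mul]
      refine Submodule.subset_span ⟨I.toRight, ?_, rfl⟩
      have c := card_toLeft_add_card_toRight (u := I)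
      have : #I.toLeft = k := by
        rw [eq_univ_of_forall hall]; simp
      have hI' : #I ≤ d := hI
      change #I.toRight + k ≤ d
      omega
    · push Not at hall
      obtain ⟨i, hi⟩ := hall
      rw [prod_eq_zero (mem_univ i)]
      · simp only [zero_mul]; exact Submodule.zero_mem _
      · simp only [hi, if_false]; decide
  | zero => simp only [Pi.zero_apply, sum_const_zero]; exact Submodule.zero_mem _
  | add x y _ _ hx hy =>
    simp only [Pi.add_apply, sum_add_distrib]
    exact Submodule.add_mem _ hx hy
  | smul a x _ hx =>
    simp only [Pi.smul_apply, smul_eq_mul, ← mul_sum]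
    exact Submodule.smul_mem _ a hx

/-- For codewords of low weight, `t` random derivatives recover every value by majority. -/
lemma exists_good (f : (Fin k ⊕ Fin M → ZMod 2) → ZMod 2) (hf : 16 * hammingNorm f ≤ 2 ^ M)
    {t : ℕ} (ht : (2:ℝ) ^ (k + M) * (19 / 32) ^ t < 1) :
    ∃ Bs : Fin t → Fin k → Fin M → ZMod 2, ∀ (u : Fin k → ZMod 2) (v : Fin M → ZMod 2),
      2 * #{j | GB f (Bs j) (v + LB (Bs j) u) ≠ f (Sum.elim u v)} < t := by
  classical
  by_contra hcon
  push Not at hcon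
  set N := Fintype.card (Fin k → Fin M → ZMod 2) with hN
  have N0 : (0:ℝ) < N := by
    have : 0 < N := Fintype.card_pos
    exact_mod_cast this
  have mom : ∀ (u : Fin k → ZMod 2) (v : Fin M → ZMod 2),
      ∑ Bs : Fin t → Fin k → Fin M → ZMod 2,
        (4:ℝ) ^ #{j | GB f (Bs j) (v + LB (Bs j) u) ≠ f (Sum.elim u v)} ≤ (N * (19 / 16)) ^ t := by
    intro u v
    have e : ∀ Bs : Fin t → Fin k → Fin M → ZMod 2,
        (4:ℝ) ^ #{j | GB f (Bs j) (v + LB (Bs j) u) ≠ f (Sum.elim u v)} =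
        ∏ j, if GB f (Bs j) (v + LB (Bs j) u) ≠ f (Sum.elim u v) then (4:ℝ) else 1 := by
      intro Bs
      rw [prod_ite, prod_const, prod_const_one, mul_one]
    have s : ∑ B : Fin k → Fin M → ZMod 2,
        (if GB f B (v + LB B u) ≠ f (Sum.elim u v) then (4:ℝ) else 1) ≤ N * (19 / 16) := by
      have : ∀ B : Fin k → Fin M → ZMod 2,
          (if GB f B (v + LB B u) ≠ f (Sum.elim u v) then (4:ℝ) else 1) =
          1 + 3 * (if GB f B (v + LB B u) ≠ f (Sum.elim u v) then (1:ℝ) else 0) := by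
        intro B; split_ifs <;> norm_num
      simp only [this, sum_add_distrib, ← mul_sum, sum_boole]
      have h := GB_fail f hf u v
      have h' : 16 * (#{B : Fin k → Fin M → ZMod 2 | GB f B (v + LB B u) ≠ f (Sum.elim u v)} : ℝ) ≤
          N := by exact_mod_cast h
      rw [sum_const, card_univ, nsmul_eq_mul, mul_one, ← hN]
      linarith
    simp only [e]
    have pu := prod_univ_sum (fun _ : Fin t => (univ : Finset (Fin k → Fin M → ZMod 2)))
      (fun _ B => if GB f B (v + LB B u) ≠ f (Sum.elim u v) then (4:ℝ) else 1)
    rw [Fintype.piFinset_univ, prod_const, card_univ, Fintype.card_fin] at pu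
    rw [← pu]
    exact pow_le_pow_left₀ (sum_nonneg fun B _ => by split_ifs <;> norm_num) s t
  have tot : ∀ Bs : Fin t → Fin k → Fin M → ZMod 2, (2:ℝ) ^ t ≤
      ∑ u : Fin k → ZMod 2, ∑ v : Fin M → ZMod 2,
        (4:ℝ) ^ #{j | GB f (Bs j) (v + LB (Bs j) u) ≠ f (Sum.elim u v)} := by
    intro Bs
    obtain ⟨u, v, h⟩ := hcon Bs
    have h1 : (2:ℝ) ^ t ≤ 4 ^ #{j | GB f (Bs j) (v + LB (Bs j) u) ≠ f (Sum.elim u v)} := by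
      rw [show (4:ℝ) = 2 ^ 2 by norm_num, ← pow_mul]
      exact pow_le_pow_right₀ one_le_two h
    refine h1.trans ?_
    refine le_trans ?_ (single_le_sum (fun u _ => sum_nonneg fun v _ => by positivity) (mem_univ u))
    exact single_le_sum (f := fun v => (4:ℝ) ^ #{j | GB f (Bs j) (v + LB (Bs j) u) ≠ f (Sum.elim u v)})
      (fun v _ => by positivity) (mem_univ v)
  have h1 := sum_le_sum fun Bs (_ : Bs ∈ (univ : Finset (Fin t → Fin k → Fin M → ZMod 2))) => tot Bs
  rw [sum_comm] at h1
  have h2 : ∑ u : Fin k → ZMod 2, ∑ Bs : Fin t → Fin k → Fin M → ZMod 2, ∑ v : Fin M → ZMod 2,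
        (4:ℝ) ^ #{j | GB f (Bs j) (v + LB (Bs j) u) ≠ f (Sum.elim u v)} ≤
      ∑ u : Fin k → ZMod 2, ∑ v : Fin M → ZMod 2, (N * (19 / 16) : ℝ) ^ t := by
    refine sum_le_sum fun u _ => ?_
    rw [sum_comm]
    exact sum_le_sum fun v _ => mom u v
  have h3 := h1.trans h2
  simp only [sum_const, card_univ, nsmul_eq_mul, Fintype.card_pi, prod_const, ZMod.card,
    Fintype.card_fin] at h3
  have hN' : (N:ℝ) = ((2 ^ M) ^ k : ℕ) := by simp [hN, ZMod.card]
  push_cast at h3 hN'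
  rw [← hN'] at h3
  have e1 : (N * (19 / 16) : ℝ) ^ t = N ^ t * 2 ^ t * (19 / 32) ^ t := by
    rw [← mul_pow, ← mul_pow]; congr 1; ring
  rw [e1] at h3
  have P : (0:ℝ) < N ^ t * 2 ^ t := by positivity
  have : (N:ℝ) ^ t * 2 ^ t * ((2:ℝ) ^ (k + M) * (19 / 32) ^ t) < N ^ t * 2 ^ t * 1 :=
    mul_lt_mul_of_pos_left ht P
  rw [pow_add] at this
  linarith

lemma lowWeight_zero {d : ℕ} (hk : d < k) {f : (Fin k ⊕ Fin M → ZMod 2) → ZMod 2}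
    (hf : f ∈ RMs (Fin k ⊕ Fin M) d) (hw : 16 * hammingNorm f ≤ 2 ^ M) : f = 0 := by
  funext p
  have hz : RMk k M d = ⊥ := by
    rw [RMk, Submodule.span_eq_bot]
    rintro _ ⟨J, hJ, rfl⟩
    have : #J + k ≤ d := hJ
    omega
  have h := GB_fail f hw (p ∘ Sum.inl) (p ∘ Sum.inr)
  have G0 : ∀ B, GB f B = 0 := fun B => by
    have := GB_mem hf B
    rwa [hz, Submodule.mem_bot] at this
  simp only [G0, Sum.elim_comp_inl_inr, Pi.zero_apply] at h
  by_contra hp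
  have : ({B : Fin k → Fin M → ZMod 2 | (0 : ZMod 2) ≠ f p} : Finset _) = univ :=
    filter_true_of_mem fun _ _ => fun h => hp (by simpa using h.symm)
  rw [this, card_univ] at h
  have : 0 < Fintype.card (Fin k → Fin M → ZMod 2) := Fintype.card_pos
  omega

open scoped Classical in
lemma card_RMk (d : ℕ) : Fintype.card (RMk k M d) = 2 ^ #{J : Finset (Fin M) | #J + k ≤ d} := by
  have h : RMk k M d = Submodule.span (ZMod 2)
      (Set.range (monoI ∘ (Subtype.val : {J : Finset (Fin M) // #J + k ≤ d} → Finset (Fin M)))) := by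
    rw [RMk]; congr 1; ext f; simp
  rw [Module.card_eq_pow_finrank (K := ZMod 2), ZMod.card, h,
    finrank_span_eq_card (monoI_linearIndependent.comp _ Subtype.val_injective),
    Fintype.card_subtype]

open scoped Classical in
/-- Low-weight codewords are determined by few random derivatives, hence are few. -/
lemma lowWeight_card (d : ℕ) {t : ℕ} (ht : (2:ℝ) ^ (k + M) * (19 / 32) ^ t < 1) :
    #{f : (Fin k ⊕ Fin M → ZMod 2) → ZMod 2 |
      f ∈ RMs (Fin k ⊕ Fin M) d ∧ 16 * hammingNorm f ≤ 2 ^ M} ≤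
      (2 ^ (k * M) * 2 ^ #{J : Finset (Fin M) | #J + k ≤ d}) ^ t := by
  set dec : (Fin t → (Fin k → Fin M → ZMod 2) × RMk k M d) → (Fin k ⊕ Fin M → ZMod 2) → ZMod 2 :=
    fun q p => if t < 2 * #{j | (q j).2.1 (p ∘ Sum.inr + LB (q j).1 (p ∘ Sum.inl)) = 1}
      then 1 else 0 with hdec
  have hsub : ({f : (Fin k ⊕ Fin M → ZMod 2) → ZMod 2 |
      f ∈ RMs (Fin k ⊕ Fin M) d ∧ 16 * hammingNorm f ≤ 2 ^ M} : Finset _) ⊆ univ.image dec := by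
    intro f hf
    simp only [mem_filter, mem_univ, true_and] at hf
    obtain ⟨Bs, hBs⟩ := exists_good f hf.2 ht
    refine mem_image.2 ⟨fun j => (Bs j, ⟨GB f (Bs j), GB_mem hf.1 (Bs j)⟩), mem_univ _, ?_⟩
    funext p
    have hb := hBs (p ∘ Sum.inl) (p ∘ Sum.inr)
    rw [Sum.elim_comp_inl_inr] at hb
    simp only [hdec]
    have cases : f p = 0 ∨ f p = 1 := by
      have : ∀ a : ZMod 2, a = 0 ∨ a = 1 := by decide
      exact this _
    rcases cases with h | h
    · rw [h] at hb ⊢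
      simp only [zmod2_ne_zero] at hb
      rw [if_neg (by omega)]
    · rw [h] at hb ⊢
      have hc := card_filter_add_card_filter_not (s := (univ : Finset (Fin t)))
        (fun j => GB f (Bs j) (p ∘ Sum.inr + LB (Bs j) (p ∘ Sum.inl)) = 1)
      rw [card_univ, Fintype.card_fin] at hc
      rw [if_pos]
      simp only [ne_eq] at hb
      omega
  refine (card_le_card hsub).trans (card_image_le.trans (le_of_eq ?_))
  rw [card_univ, Fintype.card_pi, prod_const, card_univ, Fintype.card_fin, Fintype.card_prod,
    card_RMk]
  congr 2
  simp [ZMod.card, ← pow_mul, mul_comm]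

end LowWeight

lemma reindex_mem {k M m d : ℕ} (e : Fin k ⊕ Fin M ≃ Fin m) {f : (Fin m → ZMod 2) → ZMod 2}
    (hf : f ∈ RMs (Fin m) d) : (fun p => f (p ∘ e.symm)) ∈ RMs (Fin k ⊕ Fin M) d :=
  RMs_comp (g := fun p => p ∘ e.symm) (fun i => coord_mem_RMs (e.symm i)) hf

lemma reindex_norm {k M m : ℕ} (e : Fin k ⊕ Fin M ≃ Fin m) (f : (Fin m → ZMod 2) → ZMod 2) :
    hammingNorm (fun p : Fin k ⊕ Fin M → ZMod 2 => f (p ∘ e.symm)) = hammingNorm f := by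
  simp only [hammingNorm, card_filter]
  exact Equiv.sum_comp (Equiv.arrowCongr e (Equiv.refl (ZMod 2))) fun v => if f v ≠ 0 then 1 else 0

lemma reindex_inj {k M m : ℕ} (e : Fin k ⊕ Fin M ≃ Fin m) :
    Function.Injective fun (f : (Fin m → ZMod 2) → ZMod 2) =>
      fun p : Fin k ⊕ Fin M → ZMod 2 => f (p ∘ e.symm) := by
  intro f g h
  funext v
  have := congrFun h (v ∘ e)
  simpa [Function.comp_assoc] using this

lemma RM_lowWeight_zero {m d k : ℕ} (hk : d < k) (hkm : k ≤ m) {f : (Fin m → ZMod 2) → ZMod 2}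
    (hf : f ∈ RMs (Fin m) d) (hw : 16 * hammingNorm f ≤ 2 ^ (m - k)) : f = 0 := by
  have e : Fin k ⊕ Fin (m - k) ≃ Fin m := finSumFinEquiv.trans (finCongr (by omega))
  apply reindex_inj e
  rw [← reindex_norm e] at hw
  exact lowWeight_zero hk (reindex_mem e hf) hw

open scoped Classical in
lemma RM_lowWeight_card {m d k : ℕ} (hm : 1 ≤ m) (hkm : k ≤ m) :
    #{f : (Fin m → ZMod 2) → ZMod 2 | f ∈ RMs (Fin m) d ∧ 16 * hammingNorm f ≤ 2 ^ (m - k)} ≤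
      (2 ^ (k * (m - k)) * 2 ^ #{J : Finset (Fin (m - k)) | #J + k ≤ d}) ^ (2 * m) := by
  have e : Fin k ⊕ Fin (m - k) ≃ Fin m := finSumFinEquiv.trans (finCongr (by omega))
  have ht : (2:ℝ) ^ (k + (m - k)) * (19 / 32) ^ (2 * m) < 1 := by
    rw [show k + (m - k) = m by omega, pow_mul, ← mul_pow]
    exact pow_lt_one₀ (by norm_num) (by norm_num) (by omega)
  refine le_trans (card_le_card_of_injOn _ ?_ (reindex_inj e).injOn) (lowWeight_card d ht)
  intro f hf
  simp only [coe_filter, mem_univ, true_and, Set.mem_ofPred_eq] at hf ⊢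
  exact ⟨reindex_mem e hf.1, by rw [reindex_norm e]; exact hf.2⟩

/-! ### The contribution of low-weight codewords -/

/-- Chernoff bound for binomial tails; `s` may have either sign. -/
lemma chernoff {n : ℕ} (A : Finset (Finset (Fin n))) (s e : ℝ) (hA : ∀ J ∈ A, s * #J ≤ s * e) :
    (#A : ℝ) ≤ 2 ^ n * Real.exp (n * s ^ 2 / 2 - s * (n - 2 * e)) := by
  have h := sum_pow_mul_eq_add_pow (Real.exp (-s)) (Real.exp s) (univ : Finset (Fin n))
  rw [powerset_univ, card_univ, Fintype.card_fin] at h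
  have c : Real.exp (-s) + Real.exp s ≤ 2 * Real.exp (s ^ 2 / 2) := by
    have := Real.cosh_le_exp_half_sq s
    rw [Real.cosh_eq] at this
    linarith
  have h1 : (#A : ℝ) * Real.exp (s * (n - 2 * e)) ≤
      ∑ J : Finset (Fin n), Real.exp (-s) ^ #J * Real.exp s ^ (n - #J) := by
    rw [← nsmul_eq_mul, ← sum_const]
    refine (sum_le_sum fun J hJ => ?_).trans
      (sum_le_sum_of_subset_of_nonneg (subset_univ A) fun J _ _ => by positivity)
    have hn : #J ≤ n := by simpa using card_le_univ J
    rw [← Real.exp_nat_mul, ← Real.exp_nat_mul, ← Real.exp_add, Real.exp_le_exp, Nat.cast_sub hn]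
    nlinarith [hA J hJ]
  rw [h] at h1
  have h2 : (Real.exp (-s) + Real.exp s) ^ n ≤ 2 ^ n * Real.exp (n * s ^ 2 / 2) := by
    calc (Real.exp (-s) + Real.exp s) ^ n ≤ (2 * Real.exp (s ^ 2 / 2)) ^ n :=
          pow_le_pow_left₀ (by positivity) c n
      _ = _ := by rw [mul_pow, ← Real.exp_nat_mul, mul_div_assoc]
  rw [Real.exp_sub, ← mul_div_assoc, le_div_iff₀ (Real.exp_pos _)]
  exact h1.trans h2

/-- A rate bounded away from `1` forces `d ≤ m / 2 + O(√m)`. -/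
lemma degree_bound {ρ : ℝ} (hρ : ρ < 1) :
    ∃ c > 0, ∀ m : ℕ, 1 ≤ m → ∀ d : ℕ, rr m d ≤ ρ → 2 * (d:ℝ) ≤ m + c * √m := by
  refine ⟨1 / 2 + |Real.log (1 - ρ)|, by positivity, fun m hm d hr => ?_⟩
  have m0 : (0:ℝ) < m := by exact_mod_cast hm
  have s0 : 0 < √(m:ℝ) := Real.sqrt_pos.2 m0
  have ss : √(m:ℝ) ^ 2 = m := Real.sq_sqrt m0.le
  have h := chernoff (n := m) {J | ¬ #J ≤ d} (-1 / √m) d (by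
    intro J hJ
    simp only [mem_filter, mem_univ, true_and, not_le] at hJ
    have : (d:ℝ) ≤ #J := by exact_mod_cast hJ.le
    have neg : -1 / √(m:ℝ) ≤ 0 := div_nonpos_of_nonpos_of_nonneg (by norm_num) s0.le
    exact mul_le_mul_of_nonpos_left this neg)
  have hc := card_filter_add_card_filter_not (s := (univ : Finset (Finset (Fin m)))) (fun J => #J ≤ d)
  have hcs := card_subsets (σ := Fin m) d
  rw [Fintype.card_fin] at hcs
  have hr' : (#{J : Finset (Fin m) | #J ≤ d} : ℝ) ≤ ρ * 2 ^ m := by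
    rw [hcs]; push_cast
    rwa [rr, div_le_iff₀ (by positivity)] at hr
  rw [card_univ, Fintype.card_finset, Fintype.card_fin] at hc
  have hc' : (#{J : Finset (Fin m) | #J ≤ d} : ℝ) + #{J : Finset (Fin m) | ¬ #J ≤ d} = 2 ^ m := by
    exact_mod_cast hc
  have h2 : (2:ℝ) ^ m * (1 - ρ) ≤
      2 ^ m * Real.exp (m * (-1 / √m) ^ 2 / 2 - (-1 / √m) * (m - 2 * d)) := by linarith
  have h3 := le_of_mul_le_mul_left h2 (by positivity)
  have h4 := Real.log_le_log (by linarith) h3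
  rw [Real.log_exp] at h4
  have e : (m:ℝ) * (-1 / √m) ^ 2 / 2 - (-1 / √m) * (m - 2 * d) = 1 / 2 + (m - 2 * d) / √m := by
    rw [div_pow, ss]; field_simp; ring
  rw [e] at h4
  have h5 : (Real.log (1 - ρ) - 1 / 2) * √m ≤ m - 2 * d := by
    rw [← le_div_iff₀ s0]; linarith
  nlinarith [neg_abs_le (Real.log (1 - ρ))]

lemma dyadic_class {m d k₀ : ℕ} (hd : d + 1 ≤ m) (hk₀ : k₀ ≤ m) {x : (Fin m → ZMod 2) → ZMod 2}
    (hx : x ∈ RMs (Fin m) d) (hx0 : x ≠ 0) (hw : 16 * hammingNorm x ≤ 2 ^ (m - k₀)) :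
    ∃ k, k₀ ≤ k ∧ k ≤ d ∧ 16 * hammingNorm x ≤ 2 ^ (m - k) ∧ 2 ^ (m - k) < 32 * hammingNorm x := by
  have hk₀d : k₀ ≤ d := by
    by_contra h
    exact hx0 (RM_lowWeight_zero (not_le.1 h) hk₀ hx hw)
  set P : ℕ → Prop := fun k => 16 * hammingNorm x ≤ 2 ^ (m - k)
  have hP : P (Nat.findGreatest P d) := Nat.findGreatest_spec (P := P) hk₀d hw
  refine ⟨Nat.findGreatest P d, Nat.le_findGreatest hk₀d hw, Nat.findGreatest_le d, hP, ?_⟩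
  set k := Nat.findGreatest P d with hk
  have hkd : k ≤ d := Nat.findGreatest_le d
  have hn : ¬ P (k + 1) := by
    intro h
    rcases hkd.lt_or_eq with h1 | h1
    · exact Nat.findGreatest_is_greatest (P := P) (n := d) (k := k + 1) (by omega) h1 h
    · exact hx0 (RM_lowWeight_zero (k := k + 1) (by omega) (by omega) hx h)
  have hn' : 2 ^ (m - (k + 1)) < 16 * hammingNorm x := not_le.1 hn
  rw [show m - k = (m - (k + 1)) + 1 by omega, pow_succ]
  omega

open scoped Classical in
lemma class_sum {m d k : ℕ} (hm : 1 ≤ m) (hkm : k ≤ m) {z : ℝ} (z0 : 0 < z) (z1 : z < 1)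
    {β : ℝ} (hβ : (#{J : Finset (Fin (m - k)) | #J + k ≤ d} : ℝ) ≤ β)
    (hbig : 2 * m * ((m:ℝ) ^ 2 + β) + m ≤ -Real.log z * 2 ^ (m - k) / 32) :
    ∑ x : (Fin m → ZMod 2) → ZMod 2 with x ∈ RMs (Fin m) d ∧ 16 * hammingNorm x ≤ 2 ^ (m - k) ∧
      2 ^ (m - k) < 32 * hammingNorm x, z ^ hammingNorm x ≤ Real.exp (-m) := by
  have lz : Real.log z < 0 := Real.log_neg z0 z1
  set b := #{J : Finset (Fin (m - k)) | #J + k ≤ d} with hb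
  have h1 : ∀ x ∈ ({x : (Fin m → ZMod 2) → ZMod 2 | x ∈ RMs (Fin m) d ∧
      16 * hammingNorm x ≤ 2 ^ (m - k) ∧ 2 ^ (m - k) < 32 * hammingNorm x} : Finset _),
      z ^ hammingNorm x ≤ Real.exp (Real.log z * 2 ^ (m - k) / 32) := by
    intro x hx
    simp only [mem_filter, mem_univ, true_and] at hx
    rw [← Real.exp_log z0, ← Real.exp_nat_mul, Real.exp_le_exp, Real.log_exp]
    have : (2:ℝ) ^ (m - k) < 32 * hammingNorm x := by exact_mod_cast hx.2.2
    nlinarith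
  refine (sum_le_card_nsmul _ _ _ h1).trans ?_
  rw [nsmul_eq_mul]
  have h2 : #({x : (Fin m → ZMod 2) → ZMod 2 | x ∈ RMs (Fin m) d ∧
      16 * hammingNorm x ≤ 2 ^ (m - k) ∧ 2 ^ (m - k) < 32 * hammingNorm x} : Finset _) ≤
      (2 ^ (k * (m - k)) * 2 ^ b) ^ (2 * m) := by
    refine (card_le_card fun x hx => ?_).trans (RM_lowWeight_card (d := d) hm hkm)
    simp only [mem_filter, mem_univ, true_and] at hx ⊢
    exact ⟨hx.1, hx.2.1⟩
  have h3 : (#({x : (Fin m → ZMod 2) → ZMod 2 | x ∈ RMs (Fin m) d ∧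
      16 * hammingNorm x ≤ 2 ^ (m - k) ∧ 2 ^ (m - k) < 32 * hammingNorm x} : Finset _) : ℝ) ≤
      Real.exp (2 * m * ((m:ℝ) ^ 2 + β)) := by
    have e : (2 ^ (k * (m - k)) * 2 ^ b) ^ (2 * m) = 2 ^ ((k * (m - k) + b) * (2 * m)) := by
      rw [← pow_add, ← pow_mul]
    rw [e] at h2
    have h2' : (#({x : (Fin m → ZMod 2) → ZMod 2 | x ∈ RMs (Fin m) d ∧
      16 * hammingNorm x ≤ 2 ^ (m - k) ∧ 2 ^ (m - k) < 32 * hammingNorm x} : Finset _) : ℝ) ≤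
      2 ^ ((k * (m - k) + b) * (2 * m)) := by exact_mod_cast h2
    refine h2'.trans ?_
    have e1 : (2:ℝ) ≤ Real.exp 1 := by have := Real.add_one_le_exp (1:ℝ); linarith
    refine (pow_le_pow_left₀ (by norm_num) e1 _).trans ?_
    rw [← Real.exp_nat_mul, mul_one, Real.exp_le_exp]
    push_cast
    have hkM : (k:ℝ) * ((m - k : ℕ) : ℝ) ≤ (m:ℝ) ^ 2 := by
      have : k * (m - k) ≤ m ^ 2 := by
        rw [sq]; exact Nat.mul_le_mul hkm (Nat.sub_le _ _)
      exact_mod_cast this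
    have m0 : (0:ℝ) ≤ 2 * m := by positivity
    have := mul_le_mul_of_nonneg_left (add_le_add hkM hβ) m0
    linarith
  calc _ ≤ Real.exp (2 * m * ((m:ℝ) ^ 2 + β)) * Real.exp (Real.log z * 2 ^ (m - k) / 32) := by
        gcongr
    _ = Real.exp (2 * m * ((m:ℝ) ^ 2 + β) + Real.log z * 2 ^ (m - k) / 32) := by rw [Real.exp_add]
    _ ≤ Real.exp (-m) := by
        rw [Real.exp_le_exp]
        have : -Real.log z * 2 ^ (m - k) / 32 = -(Real.log z * 2 ^ (m - k) / 32) := by ring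
        linarith

/-- The codimension scale separating low from high weights. -/
noncomputable def kz (ε : ℝ) (m : ℕ) : ℕ := ⌊ε * √m * Real.log m⌋₊

lemma tendsto_log_nat : Tendsto (fun m : ℕ => Real.log (m:ℝ)) atTop atTop :=
  Real.tendsto_log_atTop.comp tendsto_natCast_atTop_atTop

lemma kz_le_eventually (ε : ℝ) (hε : 0 < ε) (a : ℝ) (ha : 0 < a) :
    ∀ᶠ m : ℕ in atTop, ε * √m * Real.log m ≤ a * m := by
  have h : (fun x : ℝ => Real.log x) =o[atTop] fun x => x ^ (1 / 2 : ℝ) :=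
    isLittleO_log_rpow_atTop (by norm_num)
  have h2 := (h.bound (show 0 < a / ε by positivity))
  have h3 := tendsto_natCast_atTop_atTop (R := ℝ) |>.eventually h2
  filter_upwards [h3, eventually_ge_atTop 1] with m hm h1
  have m1 : (1:ℝ) ≤ m := by exact_mod_cast h1
  rw [Real.norm_of_nonneg (Real.log_nonneg m1), ← Real.sqrt_eq_rpow,
    Real.norm_of_nonneg (Real.sqrt_nonneg _)] at hm
  have ss : √(m:ℝ) * √(m:ℝ) = m := Real.mul_self_sqrt (by linarith)
  calc ε * √m * Real.log m ≤ ε * √m * (a / ε * √m) := by gcongr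
    _ = a * (√m * √m) := by field_simp
    _ = _ := by rw [ss]

open scoped Classical in
lemma dyadic_sum {m d k₀ : ℕ} (hd : d + 1 ≤ m) (hk₀ : k₀ ≤ m) {z : ℝ} (z0 : 0 ≤ z) :
    ∑ x : (Fin m → ZMod 2) → ZMod 2 with x ∈ RMs (Fin m) d ∧ x ≠ 0 ∧
        16 * hammingNorm x ≤ 2 ^ (m - k₀), z ^ hammingNorm x ≤
      ∑ k ∈ Icc k₀ d, ∑ x : (Fin m → ZMod 2) → ZMod 2 with x ∈ RMs (Fin m) d ∧
        16 * hammingNorm x ≤ 2 ^ (m - k) ∧ 2 ^ (m - k) < 32 * hammingNorm x, z ^ hammingNorm x := by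
  simp only [sum_filter]
  rw [sum_comm]
  refine sum_le_sum fun x _ => ?_
  have nn : ∀ k ∈ Icc k₀ d, 0 ≤ if x ∈ RMs (Fin m) d ∧ 16 * hammingNorm x ≤ 2 ^ (m - k) ∧
      2 ^ (m - k) < 32 * hammingNorm x then z ^ hammingNorm x else 0 := by
    intro k _
    split_ifs <;> positivity
  split_ifs with hx
  · obtain ⟨k, h1, h2, h3, h4⟩ := dyadic_class hd hk₀ hx.1 hx.2.1 hx.2.2
    refine le_trans ?_ (single_le_sum nn (mem_Icc.2 ⟨h1, h2⟩))
    rw [if_pos ⟨hx.1, h3, h4⟩]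
  · exact sum_nonneg nn

set_option maxHeartbeats 1000000 in
open scoped Classical in
/-- Codewords of weight at most `2 ^ (m - kz ε m) / 16` contribute negligibly: they are split into
dyadic weight classes, and in each class the count from `RM_lowWeight_card` is beaten by the decay
of `z ^ |x|`. -/
lemma low_sum {z ρ ε : ℝ} (z0 : 0 < z) (z1 : z < 1) (hρ : ρ < 1) (hε : 0 < ε) :
    ∀ᶠ m : ℕ in atTop, ∀ d, rr m d ≤ ρ →
      ∑ x : (Fin m → ZMod 2) → ZMod 2 with x ∈ RMs (Fin m) d ∧ x ≠ 0 ∧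
        16 * hammingNorm x ≤ 2 ^ (m - kz ε m), z ^ hammingNorm x ≤ (m + 1) * Real.exp (-m) := by
  obtain ⟨c, c0, hc⟩ := degree_bound hρ
  set ζ := -Real.log z with hζ
  have ζ0 : 0 < ζ := by have := Real.log_neg z0 z1; linarith
  set a := ε ^ 2 / 32 with ha
  have a0 : 0 < a := by positivity
  have hpow : ∀ᶠ m : ℕ in atTop, (192 / ζ) ^ 3 * (m:ℝ) ^ 9 ≤ 2 ^ m := by
    have t := (tendsto_pow_const_div_const_pow_of_one_lt 9 (show (1:ℝ) < 2 by norm_num)).const_mul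
      ((192 / ζ) ^ 3)
    rw [mul_zero] at t
    filter_upwards [t.eventually_le_const one_pos] with m hm
    rwa [mul_div_assoc', div_le_one (by positivity)] at hm
  filter_upwards [hpow, kz_le_eventually ε hε 1 one_pos, eventually_ge_atTop 12,
    tendsto_sqrt_nat.eventually_ge_atTop (6 * c), tendsto_sqrt_nat.eventually_ge_atTop (2 / ε),
    tendsto_log_nat.eventually_ge_atTop 1, tendsto_log_nat.eventually_ge_atTop (4 * c / ε),
    tendsto_log_nat.eventually_ge_atTop (2 / a),
    tendsto_natCast_atTop_atTop.eventually_ge_atTop (128 / ζ)]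
    with m hE hC h12 h6 h2ε hL1 hLc hLa hmζ d hr
  have hm1 : 1 ≤ m := by omega
  have mR : (12:ℝ) ≤ m := by exact_mod_cast h12
  have m0 : (0:ℝ) < m := by linarith
  set s := √(m:ℝ) with hs
  have s0 : 0 < s := Real.sqrt_pos.2 m0
  have ms : s ^ 2 = m := Real.sq_sqrt m0.le
  set L := Real.log (m:ℝ) with hL
  have hd := hc m hm1 d hr
  -- `d ≤ 7m/12`, so the flats used below have dimension at least `m / 3`
  have hd2 : 2 * (d:ℝ) ≤ m + m / 6 := by nlinarith
  have hdm : 3 * d + 3 ≤ 2 * m := by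
    have : (3 * d + 3 : ℝ) ≤ 2 * m := by linarith
    exact_mod_cast this
  have hk₀m : kz ε m ≤ m := by
    have : (kz ε m : ℝ) ≤ m := (Nat.floor_le (by positivity)).trans (by linarith)
    exact_mod_cast this
  have hk₀ : ε / 2 * s * L ≤ kz ε m := by
    have h := Nat.lt_floor_add_one (ε * s * L)
    rw [div_le_iff₀ hε] at h2ε
    have : 2 ≤ ε * s * L := by nlinarith
    have e : (kz ε m : ℝ) = (⌊ε * s * L⌋₊ : ℝ) := rfl
    rw [e]
    linarith
  have key : ∀ k, kz ε m ≤ k → k ≤ d →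
      ∑ x : (Fin m → ZMod 2) → ZMod 2 with x ∈ RMs (Fin m) d ∧ 16 * hammingNorm x ≤ 2 ^ (m - k) ∧
      2 ^ (m - k) < 32 * hammingNorm x, z ^ hammingNorm x ≤ Real.exp (-m) := by
    intro k hk1 hk2
    have hkm : k ≤ m := by omega
    have hkR : ε / 2 * s * L ≤ k := hk₀.trans (by exact_mod_cast hk1)
    have k0 : (0:ℝ) ≤ k := Nat.cast_nonneg k
    have hkc : c * s ≤ k / 2 := by
      rw [div_le_iff₀ hε] at hLc
      nlinarith
    have hMk : ((m - k : ℕ) : ℝ) = m - k := Nat.cast_sub hkm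
    have hkmR : (k:ℝ) ≤ m := by exact_mod_cast hkm
    have hβ : (#{J : Finset (Fin (m - k)) | #J + k ≤ d} : ℝ) ≤
        2 ^ (m - k) * Real.exp (-(k:ℝ) ^ 2 / (8 * m)) := by
      refine (chernoff _ (k / (2 * m)) ((d:ℝ) - k) ?_).trans ?_
      · intro J hJ
        simp only [mem_filter, mem_univ, true_and] at hJ
        have : (#J : ℝ) + k ≤ d := by exact_mod_cast hJ
        gcongr
        linarith
      · gcongr
        rw [hMk]
        have e1 : ((m:ℝ) - k) * (k / (2 * m)) ^ 2 / 2 ≤ m * (k / (2 * m)) ^ 2 / 2 := by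
          gcongr; linarith
        have e2 : (m:ℝ) * (k / (2 * m)) ^ 2 / 2 = k ^ 2 / (8 * m) := by field_simp; norm_num
        have e3 : k / (2 * m) * (k / 2 : ℝ) ≤ k / (2 * m) * ((m:ℝ) - k - 2 * (d - k)) := by
          gcongr; linarith
        have e4 : k / (2 * m) * (k / 2 : ℝ) = 2 * (k ^ 2 / (8 * m)) := by field_simp; norm_num
        have e5 : -(k:ℝ) ^ 2 / (8 * m) = -(k ^ 2 / (8 * m)) := by ring
        linarith
    refine class_sum hm1 hkm z0 z1 hβ ?_
    have hexp : 2 * m * Real.exp (-(k:ℝ) ^ 2 / (8 * m)) ≤ ζ / 64 := by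
      have q1 : a * L ^ 2 ≤ (k:ℝ) ^ 2 / (8 * m) := by
        rw [le_div_iff₀ (by positivity)]
        have := pow_le_pow_left₀ (by positivity) hkR 2
        calc a * L ^ 2 * (8 * m) = (ε / 2 * s * L) ^ 2 := by rw [← ms, ha]; ring
          _ ≤ _ := this
      have q2 : 2 * L ≤ a * L ^ 2 := by
        rw [div_le_iff₀ a0] at hLa
        nlinarith
      have q3 : Real.exp (-(k:ℝ) ^ 2 / (8 * m)) ≤ 1 / (m:ℝ) ^ 2 := by
        have : 1 / (m:ℝ) ^ 2 = Real.exp (-(2 * L)) := by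
          rw [Real.exp_neg, hL, show (2:ℝ) * Real.log m = ((2:ℕ):ℝ) * Real.log m by norm_num,
            Real.exp_nat_mul, Real.exp_log m0, one_div]
        rw [this, Real.exp_le_exp, neg_div]
        linarith
      calc 2 * m * Real.exp (-(k:ℝ) ^ 2 / (8 * m)) ≤ 2 * m * (1 / (m:ℝ) ^ 2) := by gcongr
        _ = 2 / m := by field_simp
        _ ≤ ζ / 64 := by
          rw [div_le_iff₀ ζ0] at hmζ
          rw [div_le_div_iff₀ m0 (by norm_num)]
          linarith
    have hpoly : 2 * m * (m:ℝ) ^ 2 + m ≤ ζ / 64 * 2 ^ (m - k) := by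
      have r1 : 192 / ζ * (m:ℝ) ^ 3 ≤ 2 ^ (m - k) := by
        refine le_of_pow_le_pow_left₀ (n := 3) (by norm_num) (by positivity) ?_
        calc (192 / ζ * (m:ℝ) ^ 3) ^ 3 = (192 / ζ) ^ 3 * (m:ℝ) ^ 9 := by ring
          _ ≤ 2 ^ m := hE
          _ ≤ 2 ^ ((m - k) * 3) := pow_le_pow_right₀ (by norm_num) (by omega)
          _ = _ := by rw [pow_mul]
      have r2 : 3 * (m:ℝ) ^ 3 = ζ / 64 * (192 / ζ * (m:ℝ) ^ 3) := by field_simp; norm_num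
      have r3 : (m:ℝ) ≤ (m:ℝ) ^ 3 := by nlinarith [sq_nonneg ((m:ℝ))]
      have r4 : ζ / 64 * (192 / ζ * (m:ℝ) ^ 3) ≤ ζ / 64 * 2 ^ (m - k) := by gcongr
      nlinarith
    have P : (0:ℝ) < 2 ^ (m - k) := by positivity
    have := mul_le_mul_of_nonneg_left hexp P.le
    nlinarith
  refine (dyadic_sum (by omega) hk₀m z0.le).trans ?_
  refine (sum_le_card_nsmul _ _ _ fun k hk => key k (mem_Icc.1 hk).1 (mem_Icc.1 hk).2).trans ?_
  rw [nsmul_eq_mul, Nat.card_Icc]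
  gcongr
  have : d + 1 - kz ε m ≤ m + 1 := by omega
  exact_mod_cast this

/-! ### Codewords of high weight -/

lemma prod_ite_hammingNorm {ι : Type} [Fintype ι] (c : ι → ZMod 2) (θ : ℝ) :
    ∏ i, (if c i = 0 then 1 else θ) = θ ^ hammingNorm c := by
  rw [prod_ite, prod_const_one, one_mul, prod_const, hammingNorm]

open scoped Classical in
/-- Trading the weight `z` for the larger weight `θ` gains `(θ / z) ^ |x|` per codeword, so the
codewords of weight above `t / 16` contribute at most `exp (-η t)` times the partition function
at `θ`, where `16 η = log (θ / z)`. -/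
lemma high_weight_le {ι : Type} [Fintype ι] [DecidableEq ι] (C : Submodule (ZMod 2) (ι → ZMod 2))
    {z θ : ℝ} (z0 : 0 < z) (hzθ : z < θ) (t : ℕ) :
    ∑ x : ι → ZMod 2 with x ∈ C ∧ t < 16 * hammingNorm x, z ^ hammingNorm x ≤
      Real.exp (-(Real.log (θ / z) / 16 * t)) * ZC C fun _ => θ := by
  have θ0 : 0 < θ := z0.trans hzθ
  rw [ZC, mul_sum, sum_filter]
  refine sum_le_sum fun x _ => ?_
  rw [prod_ite_hammingNorm]
  split_ifs with h1 h2 h2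
  · have l0 : 0 < Real.log (θ / z) := Real.log_pos ((one_lt_div z0).2 hzθ)
    have e : z ^ hammingNorm x =
        Real.exp (-(Real.log (θ / z) * hammingNorm x)) * θ ^ hammingNorm x := by
      rw [Real.exp_neg, mul_comm (Real.log _), Real.exp_nat_mul, Real.exp_log (by positivity),
        div_pow]
      field_simp
    rw [e]
    have : (t:ℝ) ≤ 16 * hammingNorm x := by exact_mod_cast h1.2.le
    refine mul_le_mul_of_nonneg_right (Real.exp_le_exp.2 ?_) (by positivity)
    nlinarith
  · exact absurd h1.1 h2
  · positivity
  · simp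

lemma ZC_pos {ι : Type} [Fintype ι] [DecidableEq ι] (C : Submodule (ZMod 2) (ι → ZMod 2))
    {θ : ℝ} (θ0 : 0 < θ) : 0 < ZC C fun _ => θ := by
  classical
  rw [ZC]
  refine sum_pos' (fun x _ => ?_) ⟨0, mem_univ _, ?_⟩
  · rw [prod_ite_hammingNorm]
    split_ifs <;> positivity
  · simp [C.zero_mem]

open scoped Classical in
/-- Codewords of weight above `2 ^ (m - kz ε m) / 16` contribute negligibly: with `θ` slightly larger
than `z`, the partition function at `θ` grows only like `exp (2 ^ m exp (-2 ε √m log m))`, which is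
beaten by the gain of `high_weight_le`. -/
lemma high_sum {z θ ρ : ℝ} (z0 : 0 < z) (hzθ : z < θ) (θ1 : θ < 1)
    (hρ : ρ < 1 - Real.logb 2 (1 + θ)) :
    ∃ ε > 0, ∀ᶠ m : ℕ in atTop, ∀ d, rr m d ≤ ρ →
      ∑ x : (Fin m → ZMod 2) → ZMod 2 with x ∈ RMs (Fin m) d ∧
        2 ^ (m - kz ε m) < 16 * hammingNorm x, z ^ hammingNorm x ≤ Real.exp (-m) := by
  have θ0 : 0 < θ := z0.trans hzθ
  have l0 : 0 < Real.logb 2 (1 + θ) := Real.logb_pos (by norm_num) (by linarith)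
  have l1 : Real.logb 2 (1 + θ) < 1 := by
    rw [Real.logb_lt_iff_lt_rpow (by norm_num) (by linarith), Real.rpow_one]
    linarith
  obtain ⟨ε, ε0, hε⟩ := hh_small l0 l1 hρ
  set η := Real.log (θ / z) / 16 with hη
  have η0 : 0 < η := div_pos (Real.log_pos ((one_lt_div z0).2 hzθ)) (by norm_num)
  have hT : Tendsto (fun m : ℕ => ε / 2 * √m * Real.log m) atTop atTop :=
    (tendsto_sqrt_nat.const_mul_atTop (half_pos ε0)).atTop_mul_atTop₀ tendsto_log_nat
  have hlin : ∀ᶠ m : ℕ in atTop, (m:ℝ) ≤ η / 2 * Real.exp (m / 4) := by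
    have h := (Real.tendsto_pow_mul_exp_neg_atTop_nhds_zero 1).comp
      ((tendsto_natCast_atTop_atTop (R := ℝ)).atTop_div_const (show (0:ℝ) < 4 by norm_num))
    filter_upwards [h.eventually_le_const (show 0 < η / 8 by positivity)] with m hm
    simp only [Function.comp, pow_one] at hm
    rw [Real.exp_neg, ← div_eq_mul_inv, div_le_iff₀ (Real.exp_pos _)] at hm
    linarith
  refine ⟨ε / 2, half_pos ε0, ?_⟩
  filter_upwards [hε, hlin, kz_le_eventually (ε / 2) (half_pos ε0) (1 / 4) (by norm_num),
    hT.eventually_ge_atTop 0, hT.eventually_ge_atTop (-Real.log (η / 2))]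
    with m hm hl hq hT0 hTη d hr
  set T := ε / 2 * √m * Real.log m with hTdef
  have hkT : (kz (ε / 2) m : ℝ) ≤ T := Nat.floor_le hT0
  have m0 : (0:ℝ) ≤ m := Nat.cast_nonneg m
  have hkm : kz (ε / 2) m ≤ m := by
    have : (kz (ε / 2) m : ℝ) ≤ m := by linarith
    exact_mod_cast this
  have log2 : Real.log 2 ≤ 1 := by linarith [Real.log_two_lt_d9]
  have log2' : 1 / 2 ≤ Real.log 2 := by linarith [Real.log_two_gt_d9]
  -- the weight threshold is at least `2 ^ m * exp (-T)`
  have hthr : (2:ℝ) ^ m * Real.exp (-T) ≤ 2 ^ (m - kz (ε / 2) m) := by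
    rw [pow_sub₀ _ (by norm_num) hkm]
    gcongr
    rw [Real.exp_neg]
    gcongr
    calc (2:ℝ) ^ kz (ε / 2) m = Real.exp (kz (ε / 2) m * Real.log 2) := by
          rw [Real.exp_nat_mul, Real.exp_log (by norm_num)]
      _ ≤ Real.exp T := by
          gcongr
          nlinarith [Nat.cast_nonneg (α := ℝ) (kz (ε / 2) m)]
  have hlog : Real.log (ZC (RMs (Fin m) d) fun _ => θ) ≤ 2 ^ m * Real.exp (-T) * Real.exp (-T) := by
    refine (log_ZC_RM m d θ0.le θ1.le).trans ?_
    have h1 := hm d hr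
    have e : Real.exp (-(ε * √m * Real.log m)) = Real.exp (-T) * Real.exp (-T) := by
      rw [← Real.exp_add]; congr 1; rw [hTdef]; ring
    rw [e] at h1
    have h2 : (2:ℝ) ^ m * hh m d (Real.logb 2 (1 + θ)) ≤
        2 ^ m * Real.exp (-T) * Real.exp (-T) := by
      rw [mul_assoc]; gcongr
    have h3 : 0 ≤ (2:ℝ) ^ m * Real.exp (-T) * Real.exp (-T) := by positivity
    nlinarith
  have hTs : Real.exp (-T) ≤ η / 2 := by
    rw [← Real.exp_log (show 0 < η / 2 by positivity)]
    gcongr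
    linarith
  have hbig : Real.exp (m / 4) ≤ 2 ^ m * Real.exp (-T) := by
    have : (2:ℝ) ^ m = Real.exp (m * Real.log 2) := by
      rw [Real.exp_nat_mul, Real.exp_log (by norm_num)]
    rw [this, ← Real.exp_add]
    gcongr
    nlinarith
  have h := high_weight_le (RMs (Fin m) d) z0 hzθ (2 ^ (m - kz (ε / 2) m))
  refine h.trans ?_
  rw [← Real.exp_log (ZC_pos (RMs (Fin m) d) θ0), ← Real.exp_add]
  gcongr
  push_cast
  rw [← hη]
  set B := (2:ℝ) ^ m * Real.exp (-T) with hB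
  have B0 : 0 ≤ B := by positivity
  have q1 := mul_le_mul_of_nonneg_left hTs B0
  have q2 := mul_le_mul_of_nonneg_left hthr η0.le
  have q3 := mul_le_mul_of_nonneg_left hbig (half_pos η0).le
  linarith

/-! ### The union bound -/

/-- Law of the noise vector as a product over coordinates. -/
lemma noise_eq_prod {ι : Type} [Fintype ι] (p : ℝ) (y : ι → ZMod 2) :
    p ^ hammingNorm y * (1 - p) ^ (Fintype.card ι - hammingNorm y) =
      ∏ i, (if y i = 0 then 1 - p else p) := by
  classical
  rw [prod_ite, prod_const, prod_const, mul_comm]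
  have h : #{i | y i = 0} + #{i | ¬ y i = 0} = Fintype.card ι :=
    card_filter_add_card_filter_not _
  have h2 : hammingNorm y = #{i | ¬ y i = 0} := rfl
  rw [h2]
  congr 2
  omega

/-- Bhattacharyya bound: by Cauchy-Schwarz between the noise law and its translate by `x`, an error
towards the fixed codeword `x` has probability at most `z ^ |x|`. -/
lemma bhattacharyya {ι : Type} [Fintype ι] [DecidableEq ι] {p : ℝ} (p0 : 0 < p) (p1 : p < 1 / 2)
    (x : ι → ZMod 2) :
    ∑ y : ι → ZMod 2, (if hammingNorm (y + x) ≤ hammingNorm y then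
      p ^ hammingNorm y * (1 - p) ^ (Fintype.card ι - hammingNorm y) else 0) ≤
      √(4 * p * (1 - p)) ^ hammingNorm x := by
  set q := 1 - p with hq
  have q0 : 0 < q := by linarith
  set μ : (ι → ZMod 2) → ℝ := fun y => ∏ i, (if y i = 0 then q else p) with hμ
  have μ0 : ∀ y, 0 < μ y := fun y => prod_pos fun i _ => by split_ifs <;> assumption
  have hle : ∀ y, (if hammingNorm (y + x) ≤ hammingNorm y then
      p ^ hammingNorm y * q ^ (Fintype.card ι - hammingNorm y) else 0) ≤
      √(μ y) * √(μ (y + x)) := by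
    intro y
    split_ifs with h
    · have e : p ^ hammingNorm y * q ^ (Fintype.card ι - hammingNorm y) = μ y := noise_eq_prod p y
      have mono : μ y ≤ μ (y + x) := by
        have e2 := noise_eq_prod p (y + x)
        rw [← e, hμ]
        simp only
        rw [← e2]
        have c1 : hammingNorm y ≤ Fintype.card ι := hammingNorm_le_card_fintype
        obtain ⟨j, hj⟩ := Nat.exists_eq_add_of_le h
        rw [hj, show Fintype.card ι - hammingNorm (y + x) =
          (Fintype.card ι - (hammingNorm (y + x) + j)) + j by omega, pow_add, pow_add]
        have : p ^ j ≤ q ^ j := by gcongr; linarith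
        calc p ^ hammingNorm (y + x) * p ^ j * q ^ (Fintype.card ι - (hammingNorm (y + x) + j))
            = p ^ hammingNorm (y + x) * q ^ (Fintype.card ι - (hammingNorm (y + x) + j)) * p ^ j := by
              ring
          _ ≤ p ^ hammingNorm (y + x) * q ^ (Fintype.card ι - (hammingNorm (y + x) + j)) * q ^ j := by
              gcongr
          _ = _ := by ring
      rw [e]
      calc μ y = √(μ y) * √(μ y) := (Real.mul_self_sqrt (μ0 y).le).symm
        _ ≤ _ := by gcongr
    · positivity
  refine (sum_le_sum fun y _ => hle y).trans (le_of_eq ?_)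
  have hs : ∀ y, √(μ y) * √(μ (y + x)) = ∏ i, (fun i (b : ZMod 2) =>
      √(if b = 0 then q else p) * √(if b + x i = 0 then q else p)) i (y i) := by
    intro y
    rw [prod_mul_distrib, hμ]
    simp only [Pi.add_apply]
    rw [Real.sqrt_prod _ fun i _ => by split_ifs <;> positivity,
      Real.sqrt_prod _ fun i _ => by split_ifs <;> positivity]
  rw [sum_congr rfl fun y _ => hs y, ← Fintype.prod_sum fun i (b : ZMod 2) =>
    √(if b = 0 then q else p) * √(if b + x i = 0 then q else p), ← prod_ite_hammingNorm]
  refine prod_congr rfl fun i _ => ?_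
  have h10 : (1 : ZMod 2) ≠ 0 := by decide
  have two : ∀ f : ZMod 2 → ℝ, ∑ b, f b = f 0 + f 1 := fun f => Fin.sum_univ_two f
  rw [two]
  by_cases hx : x i = 0
  · simp only [hx, add_zero, if_true, h10, if_false]
    rw [Real.mul_self_sqrt q0.le, Real.mul_self_sqrt p0.le]
    linarith
  · have hx1 : x i = 1 := by
      revert hx; generalize x i = b; revert b; decide
    have h11 : (1 : ZMod 2) + 1 = 0 := by decide
    simp only [hx1, zero_add, h11, if_true, h10, if_false]
    rw [show 4 * p * q = 2 ^ 2 * (p * q) by ring, Real.sqrt_mul (by positivity),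
      Real.sqrt_sq (by norm_num), Real.sqrt_mul p0.le]
    ring

open scoped Classical in
lemma Perr_le {ι : Type} [Fintype ι] [DecidableEq ι] (C : Submodule (ZMod 2) (ι → ZMod 2)) {p : ℝ} (p0 : 0 < p)
    (p1 : p < 1 / 2) :
    Perr C p ≤ ∑ x : ι → ZMod 2 with x ∈ C ∧ x ≠ 0, √(4 * p * (1 - p)) ^ hammingNorm x := by
  refine le_trans ?_ (sum_le_sum fun x _ => bhattacharyya p0 p1 x)
  -- `Perr` enumerates words through the classical decidable equality on coordinates
  have hP : Perr C p = ∑ y : ι → ZMod 2,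
      if ∃ x ∈ C, x ≠ 0 ∧ hammingNorm (y + x) ≤ hammingNorm y then
        p ^ hammingNorm y * (1 - p) ^ (Fintype.card ι - hammingNorm y) else 0 := by
    unfold Perr
    congr!
  rw [hP, sum_comm]
  refine sum_le_sum fun y _ => ?_
  have w0 : 0 ≤ p ^ hammingNorm y * (1 - p) ^ (Fintype.card ι - hammingNorm y) := by
    have : 0 < 1 - p := by linarith
    positivity
  have nn : ∀ x ∈ ({x | x ∈ C ∧ x ≠ 0} : Finset (ι → ZMod 2)),
      0 ≤ if hammingNorm (y + x) ≤ hammingNorm y then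
        p ^ hammingNorm y * (1 - p) ^ (Fintype.card ι - hammingNorm y) else 0 := by
    intro x _
    split_ifs
    exacts [w0, le_rfl]
  split_ifs with h
  · obtain ⟨x, hx, hx0, hle⟩ := h
    refine le_trans ?_ (single_le_sum nn (mem_filter.2 ⟨mem_univ x, hx, hx0⟩))
    rw [if_pos hle]
  · exact sum_nonneg nn

lemma Perr_nonneg {ι : Type} [Fintype ι] (C : Submodule (ZMod 2) (ι → ZMod 2)) {p : ℝ} (p0 : 0 < p)
    (p1 : p < 1 / 2) : 0 ≤ Perr C p := by
  classical
  have : 0 < 1 - p := by linarith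
  refine sum_nonneg fun y _ => ?_
  split_ifs <;> positivity

/-! ### Choice of parameters and conclusion -/

/-- The two sides agree at `x = 1`, and the logarithm of their quotient is monotone because
`x ≤ 2 (1 - 2 ^ (-x))` on `[0, 1]`. -/
lemma rpow_le_two_rpow_sub_one {x : ℝ} (x0 : 0 < x) (x1 : x ≤ 1) :
    x ^ (2 * Real.log 2) ≤ 2 ^ x - 1 := by
  have hpos : ∀ t : ℝ, 0 < t → 0 < (2:ℝ) ^ t - 1 := fun t ht => by
    have := Real.one_lt_rpow (show (1:ℝ) < 2 by norm_num) ht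
    linarith
  have log2 : 0 < Real.log 2 := Real.log_pos (by norm_num)
  set g : ℝ → ℝ := fun t => Real.log (2 ^ t - 1) - 2 * Real.log 2 * Real.log t with hg
  have hd : ∀ t : ℝ, 0 < t →
      HasDerivAt g (2 ^ t * Real.log 2 / (2 ^ t - 1) - 2 * Real.log 2 * t⁻¹) t := by
    intro t ht
    have h1 : HasDerivAt (fun t : ℝ => (2:ℝ) ^ t - 1) (2 ^ t * Real.log 2) t := by
      simpa [mul_comm] using ((hasDerivAt_id t).const_rpow (show (0:ℝ) < 2 by norm_num)).sub_const 1
    exact (h1.log (hpos t ht).ne').sub ((Real.hasDerivAt_log ht.ne').const_mul _)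
  have anti : AntitoneOn g (Set.Icc x 1) := by
    refine antitoneOn_of_deriv_nonpos (convex_Icc x 1)
      (fun t ht => (hd t (x0.trans_le ht.1)).continuousAt.continuousWithinAt) ?_ ?_
    · intro t ht
      rw [interior_Icc] at ht
      exact (hd t (x0.trans ht.1)).differentiableAt.differentiableWithinAt
    · intro t ht
      rw [interior_Icc] at ht
      have t0 := x0.trans ht.1
      rw [(hd t t0).deriv]
      have hb : ((1:ℝ) + -(1 / 2)) ^ t ≤ 1 + t * -(1 / 2) :=
        rpow_one_add_le_one_add_mul_self (by norm_num) t0.le ht.2.le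
      have hi : ((1:ℝ) + -(1 / 2)) ^ t = (2 ^ t)⁻¹ := by
        rw [← Real.inv_rpow (by norm_num)]; norm_num
      have P : (0:ℝ) < 2 ^ t := by positivity
      rw [hi, inv_le_iff_one_le_mul₀ P] at hb
      rw [sub_nonpos, ← div_eq_mul_inv, div_le_div_iff₀ (hpos t t0) t0]
      nlinarith
  have h := anti (Set.left_mem_Icc.2 x1) (Set.right_mem_Icc.2 x1) x1
  have g1 : g 1 = 0 := by simp [hg]; norm_num
  rw [g1] at h
  rw [← Real.exp_log (hpos x x0), Real.rpow_def_of_pos x0, Real.exp_le_exp]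
  simp only [hg] at h
  linarith

open scoped Classical in
/-- Reed-Muller codes of rate at most `ρ`, with `ρ` below the threshold, have uniformly small error
probability once `m` is large. -/
lemma RM_Perr_le {p θ ρ : ℝ} (p0 : 0 < p) (p1 : p < 1 / 2) (hzθ : √(4 * p * (1 - p)) < θ)
    (θ1 : θ < 1) (hρ : ρ < 1 - Real.logb 2 (1 + θ)) :
    ∀ᶠ m : ℕ in atTop, ∀ d, rr m d ≤ ρ →
      Perr (RMs (Fin m) d) p ≤ (m + 1) * Real.exp (-m) + Real.exp (-m) := by
  have z0 : 0 < √(4 * p * (1 - p)) := Real.sqrt_pos.2 (by nlinarith)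
  have l0 : 0 < Real.logb 2 (1 + θ) := Real.logb_pos (by norm_num) (by linarith)
  obtain ⟨ε, ε0, hε⟩ := high_sum z0 hzθ θ1 hρ
  filter_upwards [hε, low_sum z0 (hzθ.trans θ1) (show ρ < 1 by linarith) ε0] with m h1 h2 d hr
  refine (Perr_le _ p0 p1).trans ((le_trans ?_ (add_le_add (h2 d hr) (h1 d hr))))
  simp only [sum_filter]
  rw [← sum_add_distrib]
  refine sum_le_sum fun x _ => ?_
  have w0 : 0 ≤ √(4 * p * (1 - p)) ^ hammingNorm x := by positivity
  by_cases hx : x ∈ RMs (Fin m) d ∧ x ≠ 0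
  · rw [if_pos hx]
    by_cases hw : 16 * hammingNorm x ≤ 2 ^ (m - kz ε m)
    · rw [if_pos ⟨hx.1, hx.2, hw⟩]
      refine le_add_of_nonneg_right ?_
      split_ifs
      exacts [w0, le_rfl]
    · rw [if_pos (show _ ∧ _ from ⟨hx.1, not_le.1 hw⟩)]
      refine le_add_of_nonneg_left ?_
      split_ifs
      exacts [w0, le_rfl]
  · rw [if_neg hx]
    refine add_nonneg ?_ ?_ <;> split_ifs
    exacts [w0, le_rfl, w0, le_rfl]

lemma codeRate_RM (m d : ℕ) : codeRate (ReedMuller m d) = rr m d := by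
  rw [ReedMuller_eq, codeRate, ← finrank_RM]
  simp [ZMod.card]

lemma rr_le_one (m d : ℕ) : rr m d ≤ 1 := by
  rw [← finrank_RM, div_le_one (by positivity)]
  have := Submodule.finrank_le (RMs (Fin m) d)
  have h : Module.finrank (ZMod 2) ((Fin m → ZMod 2) → ZMod 2) = 2 ^ m := by simp [ZMod.card]
  rw [h] at this
  exact_mod_cast this

/-- Reed-Muller codes decode errors on BSC(p) w.h.p. when
`R < 1 - (4p(1-p))^(1/(4 ln 2))`. -/
theorem reed_muller_BSC (p R : ℝ) (hp0 : 0 < p) (hp1 : p < 1 / 2)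
    (hR0 : 0 < R) (hR1 : R < 1)
    (hcap : R < 1 - (4 * p * (1 - p)) ^ (1 / (4 * Real.log 2)))
    (m d : ℕ → ℕ) (hdm : ∀ k, d k ≤ m k)
    (hm : Filter.Tendsto (fun k => 2 ^ m k) Filter.atTop Filter.atTop)
    (hrate : Filter.limsup (fun k => codeRate (ReedMuller (m k) (d k)))
      Filter.atTop ≤ R) :
    Filter.Tendsto (fun k => Perr (ReedMuller (m k) (d k)) p) Filter.atTop (nhds 0) := by
  have log2 : 0 < Real.log 2 := Real.log_pos (by norm_num)
  set u := 4 * p * (1 - p) with hu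
  have u0 : 0 < u := by nlinarith
  -- the hypothesis on `R` gives `√u < 2 ^ (1 - R) - 1`
  have hz : √u < 2 ^ (1 - R) - 1 := by
    refine lt_of_lt_of_le ?_ (rpow_le_two_rpow_sub_one (by linarith) (by linarith))
    have e : √u = (u ^ (1 / (4 * Real.log 2))) ^ (2 * Real.log 2) := by
      rw [← Real.rpow_mul u0.le, Real.sqrt_eq_rpow]
      congr 1
      field_simp
      norm_num
    rw [e]
    exact Real.rpow_lt_rpow (by positivity) (by linarith) (by positivity)
  obtain ⟨θ, hθ1, hθ2⟩ := exists_between hz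
  have θ0 : 0 < θ := (Real.sqrt_nonneg u).trans_lt hθ1
  have θlt : θ < 1 := by
    have : (2:ℝ) ^ (1 - R) ≤ 2 ^ (1:ℝ) :=
      Real.rpow_le_rpow_of_exponent_le (by norm_num) (by linarith)
    rw [Real.rpow_one] at this
    linarith
  have hl : Real.logb 2 (1 + θ) < 1 - R := by
    rw [Real.logb_lt_iff_lt_rpow (by norm_num) (by linarith)]
    linarith
  obtain ⟨ρ, hρ1, hρ2⟩ := exists_between (show R < 1 - Real.logb 2 (1 + θ) by linarith)
  have hmt : Tendsto m atTop atTop := by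
    refine tendsto_atTop.2 fun b => ?_
    filter_upwards [hm.eventually_ge_atTop (2 ^ b)] with k hk
    exact (Nat.pow_le_pow_iff_right (by norm_num)).1 hk
  have hrho : ∀ᶠ k in atTop, rr (m k) (d k) < ρ := by
    simp only [codeRate_RM] at hrate
    exact eventually_lt_of_limsup_lt (hrate.trans_lt hρ1)
      (isBoundedUnder_of ⟨1, fun k => rr_le_one _ _⟩)
  have hlim : Tendsto (fun n : ℕ => ((n:ℝ) + 1) * Real.exp (-n) + Real.exp (-n)) atTop (nhds 0) := by
    have t0 := (Real.tendsto_pow_mul_exp_neg_atTop_nhds_zero 0).comp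
      (tendsto_natCast_atTop_atTop (R := ℝ))
    have t1 := (Real.tendsto_pow_mul_exp_neg_atTop_nhds_zero 1).comp
      (tendsto_natCast_atTop_atTop (R := ℝ))
    have t := t1.add (t0.add t0)
    simp only [add_zero] at t
    refine t.congr fun n => ?_
    simp only [Function.comp, pow_one, pow_zero]
    ring
  refine tendsto_of_tendsto_of_tendsto_of_le_of_le' tendsto_const_nhds (hlim.comp hmt)
    (Eventually.of_forall fun k => Perr_nonneg _ hp0 hp1) ?_
  filter_upwards [hmt.eventually (RM_Perr_le hp0 hp1 hθ1 θlt hρ2), hrho] with k h1 h2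
  rw [ReedMuller_eq]
  exact h1 (d k) h2.le
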